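/- arXiv:1610.00570 — 2 statements merged into one kernel-verified Lean document; each statement's English description precedes it below -/
import Mathlib

section
/- If R is a relative m-ovoid of Q⁻(2n+1,q) with respect to 𝒬 with 0 < m < q^{n−1} (a proper relative m-ovoid), then q is even and 2m = q^{n−1}; in particular |R| equals the number of singular points outside H not belonging to R, i.e. R is a relative hemisystem. -/
noncomputable section

open Module

variable {F V : Type*} [Field F] [AddCommGroup V] [Module F V]

/-- `P` is a singular point of the quadratic form `Q`, i.e. a `1`-dimensional subspace
spanned by a nonzero singular vector. -/
def IsSingularPoint (Q : QuadraticForm F V) (P : Submodule F V) : Prop :=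
  ∃ v : V, v ≠ 0 ∧ Q v = 0 ∧ P = Submodule.span F {v}

/-- A subspace is totally singular if `Q` vanishes identically on it. -/
def TotallySingular (Q : QuadraticForm F V) (W : Submodule F V) : Prop :=
  ∀ v ∈ W, Q v = 0

/-- A generator is a totally singular subspace of (vector space) dimension `n`. -/
def IsGenerator (Q : QuadraticForm F V) (n : ℕ) (g : Submodule F V) : Prop :=
  TotallySingular Q g ∧ finrank F g = n

/-- The restriction of `Q` to the subspace `U` is nondegenerate. -/
def NondegOn (Q : QuadraticForm F V) (U : Submodule F V) : Prop :=
  ∀ v ∈ U, Q v = 0 → (∀ w ∈ U, QuadraticMap.polar (⇑Q) v w = 0) → v = 0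

/-- The quadratic form `Q` is nondegenerate. -/
def Nondeg (Q : QuadraticForm F V) : Prop :=
  ∀ v : V, Q v = 0 → (∀ w : V, QuadraticMap.polar (⇑Q) v w = 0) → v = 0

/-- `Q` has Witt index `n`: every totally singular subspace has dimension at most `n`
and some totally singular subspace has dimension `n`. -/
def HasWittIndex (Q : QuadraticForm F V) (n : ℕ) : Prop :=
  (∀ W : Submodule F V, TotallySingular Q W → finrank F W ≤ n) ∧
  ∃ W : Submodule F V, TotallySingular Q W ∧ finrank F W = n

/-- A relative `m`-ovoid with respect to the parabolic section cut out by the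
hyperplane `H`: a set `R` of singular points not contained in `H` such that every
generator not contained in `H` contains exactly `m` points of `R`. -/
def IsRelativeMOvoid (Q : QuadraticForm F V) (n : ℕ) (H : Submodule F V) (m : ℕ)
    (R : Set (Submodule F V)) : Prop :=
  (∀ P ∈ R, IsSingularPoint Q P ∧ ¬ P ≤ H) ∧
  ∀ g : Submodule F V, IsGenerator Q n g → ¬ g ≤ H → {P ∈ R | P ≤ g}.ncard = m

/-!
Let `q = |F|` and let `S` be the set of singular points outside `H`. The weight
`f = q^(n-1) 1_R - m 1_S` on singular points sums to zero on every generator. Descending from the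
generators, by averaging over the totally singular subspaces that contain a given one `U` as a
hyperplane, the sum of `f` over `U^⊥` is a fixed multiple of its sum over `U`; hence `f` sums to
zero, and on singular points the operator `A` summing `f` over `x^⊥` is multiplication by `-c`,
where `c = q^n (q - 1)`. As `A` is self-adjoint and `A² f = c² f` (up to the value at `0`), the
function `A f + c f` has norm zero, so `A f = -c f` at all vectors, singular or not.

Write `H = N^⊥`. Summing `A f` over a line `v + F N` counts every vector outside `H` once, so gives
the total sum `0`; hence `f` itself sums to zero on such lines. A line meets the quadric in at most
two vectors outside `H`, whose weights are therefore opposite. The weights there are `q^(n-1) - m`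
and `-m`, so `q^(n-1) - m = m`.
-/

/-! ### Totally singular subspaces and polarity -/

/-- The orthogonal complement `U^⊥` of a subspace with respect to the polar form of `Q`. -/
def perp (Q : QuadraticForm F V) (U : Submodule F V) : Submodule F V :=
  LinearMap.BilinForm.orthogonal (QuadraticMap.polarBilin Q) U

section Perp

variable {Q : QuadraticForm F V} {U W : Submodule F V} {n : ℕ}

theorem mem_perp {x : V} : x ∈ perp Q U ↔ ∀ u ∈ U, QuadraticMap.polar Q u x = 0 :=
  Iff.rfl

theorem isRefl_polarBilin (Q : QuadraticForm F V) :
    LinearMap.BilinForm.IsRefl (QuadraticMap.polarBilin Q) :=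
  fun x y h ↦ (QuadraticMap.polar_comm Q y x).trans h

theorem perp_anti (h : U ≤ W) : perp Q W ≤ perp Q U :=
  LinearMap.BilinForm.orthogonal_le h

theorem le_perp_comm : U ≤ perp Q W ↔ W ≤ perp Q U := by
  have swap {U W : Submodule F V} (h : U ≤ perp Q W) : W ≤ perp Q U := fun w hw u hu ↦
    isRefl_polarBilin Q w u (h hu w hw)
  exact ⟨swap, swap⟩

theorem mem_perp_span_singleton {x y : V} :
    y ∈ perp Q (F ∙ x) ↔ QuadraticMap.polar Q x y = 0 := by
  refine ⟨fun h ↦ h x (Submodule.mem_span_singleton_self x), fun h u hu ↦ ?_⟩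
  obtain ⟨c, rfl⟩ := Submodule.mem_span_singleton.1 hu
  exact (QuadraticMap.polar_smul_left Q c x y).trans (by rw [h, smul_zero])

theorem perp_sup : perp Q (U ⊔ W) = perp Q U ⊓ perp Q W :=
  eq_of_forall_le_iff fun X ↦ by
    rw [le_perp_comm, sup_le_iff, le_inf_iff, le_perp_comm, le_perp_comm (U := W)]

theorem perp_bot : perp Q ⊥ = ⊤ :=
  LinearMap.BilinForm.orthogonal_bot

theorem TotallySingular.le_perp (hU : TotallySingular Q U) : U ≤ perp Q U := fun x hx u hu ↦ by
  simp [QuadraticMap.polar, hU _ hx, hU _ hu, hU _ (U.add_mem hu hx)]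

theorem TotallySingular.mono (hW : TotallySingular Q W) (h : U ≤ W) : TotallySingular Q U :=
  fun v hv ↦ hW v (h hv)

theorem TotallySingular.sup (hU : TotallySingular Q U) (hW : TotallySingular Q W)
    (h : W ≤ perp Q U) : TotallySingular Q (U ⊔ W) := by
  intro v hv
  obtain ⟨u, hu, w, hw, rfl⟩ := Submodule.mem_sup.1 hv
  rw [QuadraticMap.map_add Q, hU u hu, hW w hw, mem_perp.1 (h hw) u hu, add_zero, add_zero]

theorem totallySingular_span_singleton {v : V} (hv : Q v = 0) : TotallySingular Q (F ∙ v) := by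
  intro x hx
  obtain ⟨c, rfl⟩ := Submodule.mem_span_singleton.1 hx
  rw [QuadraticMap.map_smul, hv, smul_zero]

theorem TotallySingular.sup_span_singleton (hU : TotallySingular Q U) {v : V} (hv : Q v = 0)
    (hvU : v ∈ perp Q U) : TotallySingular Q (U ⊔ F ∙ v) :=
  hU.sup (totallySingular_span_singleton hv) ((Submodule.span_singleton_le_iff_mem _ _).2 hvU)

theorem map_add_smul_of_map_eq_zero {e : V} (he : Q e = 0) (x : V) (t : F) :
    Q (x + t • e) = Q x + t * QuadraticMap.polar Q e x := by
  rw [QuadraticMap.map_add Q, QuadraticMap.map_smul, he, QuadraticMap.polar_smul_right,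
    QuadraticMap.polar_comm, smul_zero, add_zero, smul_eq_mul]

theorem sup_span_singleton_le {v : V} (hU : U ≤ W) (hv : v ∈ W) : U ⊔ F ∙ v ≤ W :=
  sup_le hU ((Submodule.span_singleton_le_iff_mem _ _).2 hv)

theorem mem_sup_span_singleton_comm {v w : V} (hv : v ∉ U) (hw : w ∉ U) :
    v ∈ U ⊔ F ∙ w ↔ w ∈ U ⊔ F ∙ v := by
  have sup_eq (x : V) : U ⊔ F ∙ x = Submodule.span F (insert x U) := by
    rw [Submodule.span_insert, Submodule.span_eq, sup_comm]
  simp only [sup_eq]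
  exact ⟨fun h ↦ mem_span_insert_exchange h (by rwa [Submodule.span_eq]),
    fun h ↦ mem_span_insert_exchange h (by rwa [Submodule.span_eq])⟩

section FiniteDimensional

variable [FiniteDimensional F V]

theorem finrank_perp_add_finrank (hQ : (QuadraticMap.polarBilin Q).Nondegenerate)
    (U : Submodule F V) : finrank F (perp Q U) + finrank F U = finrank F V := by
  rw [perp, LinearMap.BilinForm.finrank_orthogonal hQ, Nat.sub_add_cancel U.finrank_le]

theorem perp_perp (hQ : (QuadraticMap.polarBilin Q).Nondegenerate) (U : Submodule F V) :
    perp Q (perp Q U) = U :=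
  LinearMap.BilinForm.orthogonal_orthogonal hQ (isRefl_polarBilin Q) U

theorem exists_perp_span_singleton_eq (hQ : (QuadraticMap.polarBilin Q).Nondegenerate)
    {H : Submodule F V} (hH : finrank F H + 1 = finrank F V) :
    ∃ N : V, perp Q (F ∙ N) = H := by
  have hrank : finrank F (perp Q H) = 1 := by
    have := finrank_perp_add_finrank hQ H
    omega
  have hne : perp Q H ≠ ⊥ := Submodule.one_le_finrank_iff.1 hrank.ge
  obtain ⟨N, hN, hN0⟩ := Submodule.exists_mem_ne_zero_of_ne_bot hne
  exact ⟨N, by rw [← eq_span_singleton_of_mem_of_finrank_eq_one hrank hN hN0, perp_perp hQ]⟩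

theorem IsGenerator.mem_of_mem_perp (hQw : HasWittIndex Q n) {g : Submodule F V}
    (hg : IsGenerator Q n g) {x : V} (hx : Q x = 0) (hxg : x ∈ perp Q g) : x ∈ g := by
  by_contra hmem
  have hle := hQw.1 _ (hg.1.sup_span_singleton hx hxg)
  rw [Submodule.finrank_sup_span_singleton hmem, hg.2] at hle
  omega

-- The generator is `U + (U^⊥ ∩ W)` for any given generator `W`.
theorem TotallySingular.exists_isGenerator_ge (hQ : (QuadraticMap.polarBilin Q).Nondegenerate)
    (hQw : HasWittIndex Q n) (hU : TotallySingular Q U) : ∃ g, IsGenerator Q n g ∧ U ≤ g := by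
  obtain ⟨W, hW, hWn⟩ := hQw.2
  have hsing : TotallySingular Q (U ⊔ perp Q U ⊓ W) := hU.sup (hW.mono inf_le_right) inf_le_left
  have hinf : U ⊓ perp Q W = U ⊓ W :=
    le_antisymm (fun x hx ↦ ⟨hx.1, IsGenerator.mem_of_mem_perp hQw ⟨hW, hWn⟩ (hU x hx.1) hx.2⟩)
      (inf_le_inf_left _ hW.le_perp)
  have hperp : perp Q (U ⊔ perp Q W) = perp Q U ⊓ W := by rw [perp_sup, perp_perp hQ]
  refine ⟨_, ⟨hsing, le_antisymm (hQw.1 _ hsing) ?_⟩, le_sup_left⟩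
  have rank_perp_W := finrank_perp_add_finrank hQ W
  have rank_perp_sup := finrank_perp_add_finrank hQ (U ⊔ perp Q W)
  have rank_sup_perp := Submodule.finrank_sup_add_finrank_inf_eq U (perp Q W)
  have rank_sup := Submodule.finrank_sup_add_finrank_inf_eq U (perp Q U ⊓ W)
  have rank_inf := Submodule.finrank_mono
    (inf_le_inf_left U inf_le_right : U ⊓ (perp Q U ⊓ W) ≤ U ⊓ W)
  rw [hperp] at rank_perp_sup
  rw [hinf] at rank_sup_perp
  omega

end FiniteDimensional

end Perp

/-! ### Elliptic quadratic forms -/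

/-- `Q` defines an elliptic quadric `Q⁻(2n+1, q)`: the space has dimension `2n + 2`, the Witt index
is `n`, and nondegeneracy is required of the polar form. -/
structure IsElliptic (Q : QuadraticForm F V) (n : ℕ) : Prop where
  finrank_eq : finrank F V = 2 * n + 2
  nondegenerate : (QuadraticMap.polarBilin Q).Nondegenerate
  hasWittIndex : HasWittIndex Q n

theorem IsElliptic.finiteDimensional {Q : QuadraticForm F V} {n : ℕ} (hQ : IsElliptic Q n) :
    FiniteDimensional F V :=
  FiniteDimensional.of_finrank_pos (by rw [hQ.finrank_eq]; omega)

section Radical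

variable [Finite F] {Q : QuadraticForm F V} {r : V}

theorem exists_map_sub_smul_eq_zero (hr : ∀ w, QuadraticMap.polar Q r w = 0) (hQr : Q r ≠ 0)
    (y : V) : ∃ a : F, Q (y - a • r) = 0 := by
  have two_eq_zero : (2 : F) = 0 := by
    have h := hr r
    rw [QuadraticMap.polar_self, two_nsmul, ← two_mul] at h
    exact (mul_eq_zero.1 h).resolve_right hQr
  have : CharP F 2 := CharTwo.of_one_ne_zero_of_two_eq_zero one_ne_zero two_eq_zero
  obtain ⟨a, ha⟩ := FiniteField.isSquare_of_char_two (ringChar.eq F 2) (Q y / Q r)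
  refine ⟨a, ?_⟩
  rw [sub_eq_add_neg, QuadraticMap.map_add Q, QuadraticMap.map_neg, QuadraticMap.map_smul,
    QuadraticMap.polar_neg_right, QuadraticMap.polar_smul_right, QuadraticMap.polar_comm, hr,
    ← ha, smul_eq_mul, div_mul_cancel₀ _ hQr, CharTwo.add_self_eq_zero, smul_zero, neg_zero,
    add_zero]

-- In characteristic two, a nonsingular radical vector `r` would force `g^⊥ = g + ⟨r⟩` for a
-- generator `g`, contradicting `dim g^⊥ ≥ n + 2`.
theorem Nondeg.nondegenerate_polarBilin {n : ℕ} (hV : finrank F V = 2 * n + 2) (hQnd : Nondeg Q)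
    (hQw : HasWittIndex Q n) : (QuadraticMap.polarBilin Q).Nondegenerate := by
  have : FiniteDimensional F V := FiniteDimensional.of_finrank_pos (by omega)
  rw [(isRefl_polarBilin Q).nondegenerate_iff_separatingLeft]
  intro r hr
  by_contra hr0
  have hQr : Q r ≠ 0 := fun h ↦ hr0 (hQnd r h hr)
  obtain ⟨g, hg, hgn⟩ := hQw.2
  have hle : perp Q g ≤ g ⊔ F ∙ r := by
    intro y hy
    obtain ⟨a, ha⟩ := exists_map_sub_smul_eq_zero hr hQr y
    have hrg : r ∈ perp Q g := fun u _ ↦ isRefl_polarBilin Q r u (hr u)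
    have hmem : y - a • r ∈ g := IsGenerator.mem_of_mem_perp hQw ⟨hg, hgn⟩ ha
      (Submodule.sub_mem _ hy (Submodule.smul_mem _ _ hrg))
    rw [← sub_add_cancel y (a • r)]
    exact Submodule.add_mem_sup hmem (Submodule.smul_mem _ _ (Submodule.mem_span_singleton_self r))
  have rank_le := Submodule.finrank_mono hle
  have rank_sup := Submodule.finrank_sup_span_singleton (fun h ↦ hQr (hg r h) : r ∉ g)
  have rank_add : _ = _ :=
    LinearMap.BilinForm.finrank_add_finrank_orthogonal (isRefl_polarBilin Q) g
  rw [← perp] at rank_add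
  omega

end Radical

theorem IsElliptic.exists_singular_notMem {Q : QuadraticForm F V} {n : ℕ} (hQ : IsElliptic Q n)
    (hn : 0 < n) {H : Submodule F V} (hH : H ≠ ⊤) : ∃ v, Q v = 0 ∧ v ∉ H := by
  have := hQ.finiteDimensional
  by_contra! hsing
  obtain ⟨W, hW, hWn⟩ := hQ.hasWittIndex.2
  have hW0 : W ≠ ⊥ := by
    rintro rfl
    rw [finrank_bot] at hWn
    omega
  obtain ⟨e, heW, he0⟩ := Submodule.exists_mem_ne_zero_of_ne_bot hW0
  have hQe : Q e = 0 := hW e heW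
  -- A vector `z` not orthogonal to `e` spans with `e` a plane with a second singular point.
  have hcover : ((⊤ : Submodule F V) : Set V) ⊆ perp Q (F ∙ e) ∪ H := by
    intro z _
    refine or_iff_not_imp_left.2 fun hz ↦ ?_
    have hez : QuadraticMap.polar Q e z ≠ 0 := mt mem_perp_span_singleton.2 hz
    have hQz : Q (z + (-Q z / QuadraticMap.polar Q e z) • e) = 0 := by
      rw [map_add_smul_of_map_eq_zero hQe, div_mul_cancel₀ _ hez, add_neg_cancel]
    exact (H.add_mem_iff_left (H.smul_mem _ (hsing e hQe))).1 (hsing _ hQz)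
  obtain htop | htop := AddSubgroupClass.subset_union.1 hcover
  · exact he0 (hQ.nondegenerate.1 e fun w ↦ mem_perp_span_singleton.1 (htop trivial))
  · exact hH (top_le_iff.1 htop)

/-! ### Singular vectors and residual spaces -/

section Finite

open Finset

theorem sum_sum_filter_of_symm {α A : Type*} [Semiring A] {s : Finset α} {r : α → α → Prop}
    [DecidableRel r] (hr : ∀ x ∈ s, ∀ y ∈ s, r x y ↔ r y x) {c : A}
    (hc : ∀ x ∈ s, (#{y ∈ s | r x y} : A) = c) (f : α → A) :
    ∑ x ∈ s, ∑ y ∈ s with r x y, f y = c * ∑ y ∈ s, f y := by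
  calc ∑ x ∈ s, ∑ y ∈ s with r x y, f y = ∑ y ∈ s, ∑ x ∈ s with r y x, f y :=
        sum_comm' fun x y ↦ by
          simp only [mem_filter]
          have := hr x
          grind
    _ = ∑ y ∈ s, c * f y := sum_congr rfl fun y hy ↦ by rw [sum_const, nsmul_eq_mul, hc y hy]
    _ = c * ∑ y ∈ s, f y := (mul_sum ..).symm

variable [Fintype V] {Q : QuadraticForm F V} {n : ℕ} {U W : Submodule F V}

open Classical in
/-- The singular vectors of `Q` in the subspace `W`, including `0`. -/
def singularVectors (Q : QuadraticForm F V) (W : Submodule F V) : Finset V :=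
  {u | u ∈ W ∧ Q u = 0}

theorem mem_singularVectors {u : V} : u ∈ singularVectors Q W ↔ u ∈ W ∧ Q u = 0 := by
  simp [singularVectors]

theorem singularVectors_mono (h : U ≤ W) : singularVectors Q U ⊆ singularVectors Q W :=
  fun u hu ↦ by
    rw [mem_singularVectors] at hu ⊢
    exact ⟨h hu.1, hu.2⟩

open Classical in
theorem TotallySingular.singularVectors_eq (hU : TotallySingular Q U) :
    singularVectors Q U = ({u | u ∈ U} : Finset V) :=
  filter_congr fun u _ ↦ and_iff_left_of_imp (hU u)

theorem IsGenerator.singularVectors_perp (hQw : HasWittIndex Q n) {g : Submodule F V}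
    (hg : IsGenerator Q n g) : singularVectors Q (perp Q g) = singularVectors Q g :=
  (singularVectors_mono hg.1.le_perp).antisymm' fun x hx ↦ by
    rw [mem_singularVectors] at hx ⊢
    exact ⟨hg.mem_of_mem_perp hQw hx.2 hx.1, hx.2⟩

open Classical in
/-- The singular vectors of `U^⊥` outside `U`; for totally singular `U` they lie over the singular
points of the residual space `U^⊥ / U`. -/
def residualVectors (Q : QuadraticForm F V) (U : Submodule F V) : Finset V :=
  singularVectors Q (perp Q U) \ singularVectors Q U

theorem mem_residualVectors {u : V} :
    u ∈ residualVectors Q U ↔ u ∈ perp Q U ∧ Q u = 0 ∧ u ∉ U := by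
  classical
  rw [residualVectors, mem_sdiff, mem_singularVectors, mem_singularVectors]
  tauto

open Classical in
theorem sum_singularVectors_eq_add {A : Type*} [AddCommMonoid A]
    (hUW : U ≤ W) (hWU : W ≤ perp Q U) (f : V → A) :
    ∑ u ∈ singularVectors Q W, f u =
      ∑ u ∈ singularVectors Q U, f u + ∑ u ∈ residualVectors Q U with u ∈ W, f u := by
  rw [← sum_sdiff (singularVectors_mono hUW), add_comm]
  congr 2
  ext u
  rw [mem_sdiff, mem_filter, mem_residualVectors, mem_singularVectors, mem_singularVectors]
  have := @hWU u
  tauto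

open Classical in
theorem card_singularVectors_eq_add (hUW : U ≤ W) (hWU : W ≤ perp Q U) :
    #(singularVectors Q W) = #(singularVectors Q U) + #{u ∈ residualVectors Q U | u ∈ W} := by
  simpa only [card_eq_sum_ones] using sum_singularVectors_eq_add hUW hWU fun _ ↦ 1

theorem sum_residualVectors_sum_singularVectors {A : Type*} [Ring A]
    {W : V → Submodule F V} (hUW : ∀ y ∈ residualVectors Q U, U ≤ W y)
    (hWU : ∀ y ∈ residualVectors Q U, W y ≤ perp Q U)
    (hsymm : ∀ x ∈ residualVectors Q U, ∀ y ∈ residualVectors Q U, y ∈ W x ↔ x ∈ W y) {c : A}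
    (hcard : ∀ y ∈ residualVectors Q U,
      (#(singularVectors Q (W y)) : A) = #(singularVectors Q U) + c)
    (f : V → A) :
    ∑ y ∈ residualVectors Q U, ∑ u ∈ singularVectors Q (W y), f u =
      #(residualVectors Q U) * ∑ u ∈ singularVectors Q U, f u +
        c * ∑ u ∈ residualVectors Q U, f u := by
  classical
  have hdegree : ∀ y ∈ residualVectors Q U, (#{u ∈ residualVectors Q U | u ∈ W y} : A) = c := by
    intro y hy
    have := hcard y hy
    rwa [card_singularVectors_eq_add (hUW y hy) (hWU y hy), Nat.cast_add, add_right_inj] at this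
  rw [sum_congr rfl fun y hy ↦ sum_singularVectors_eq_add (hUW y hy) (hWU y hy) f,
    sum_add_distrib, sum_const, nsmul_eq_mul, sum_sum_filter_of_symm hsymm hdegree]

section Counting

variable [Fintype F]

open Classical in
theorem card_filter_mem (U : Submodule F V) :
    #{x | x ∈ U} = Fintype.card F ^ finrank F U := by
  rw [← Module.card_eq_pow_finrank (K := F) (V := U), Fintype.card_subtype]

theorem TotallySingular.card_singularVectors (hU : TotallySingular Q U) :
    #(singularVectors Q U) = Fintype.card F ^ finrank F U := by
  classical
  rw [hU.singularVectors_eq, card_filter_mem]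

open Classical in
-- A vector of `W` outside `e^⊥` is uniquely of the form `y + t • e` with `y` singular.
theorem card_mul_card_singularVectors_sdiff {e : V} (he : Q e = 0) (heW : e ∈ W) :
    #(singularVectors Q W \ singularVectors Q (W ⊓ perp Q (F ∙ e))) * Fintype.card F =
      #(({x | x ∈ W} : Finset V) \ ({x | x ∈ W ⊓ perp Q (F ∙ e)} : Finset V)) := by
  have polar_add (x : V) (t : F) :
      QuadraticMap.polar Q e (x + t • e) = QuadraticMap.polar Q e x := by
    rw [QuadraticMap.polar_add_right, QuadraticMap.polar_smul_right, QuadraticMap.polar_self, he,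
      smul_zero, smul_zero, add_zero]
  have mem_add (x : V) (t : F) : x + t • e ∈ W ↔ x ∈ W :=
    W.add_mem_iff_left (W.smul_mem t heW)
  rw [← card_univ, ← card_product]
  refine card_nbij' (fun p ↦ p.1 + p.2 • e)
    (fun x ↦ (x + (-(Q x / QuadraticMap.polar Q e x)) • e, Q x / QuadraticMap.polar Q e x))
    ?_ ?_ ?_ ?_
  all_goals
    simp +contextual [-neg_smul, Set.MapsTo, Set.LeftInvOn, mem_singularVectors,
      mem_perp_span_singleton, polar_add, mem_add, map_add_smul_of_map_eq_zero he, add_assoc,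
      ← add_smul]

theorem card_mul_card_singularVectors {e : V} (he : Q e = 0) (heW : e ∈ W) :
    Fintype.card F * #(singularVectors Q W) + Fintype.card F ^ finrank F ↥(W ⊓ perp Q (F ∙ e)) =
      Fintype.card F ^ finrank F W +
        Fintype.card F * #(singularVectors Q (W ⊓ perp Q (F ∙ e))) := by
  classical
  have hle : W ⊓ perp Q (F ∙ e) ≤ W := inf_le_left
  have hsdiff := card_mul_card_singularVectors_sdiff he heW
  have hsingular := card_sdiff_add_card_eq_card (singularVectors_mono (Q := Q) hle)
  have hall : _ = #{x | x ∈ W} :=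
    card_sdiff_add_card_eq_card (monotone_filter_right univ fun x _ (hx : x ∈ W ⊓ _) ↦ hle hx)
  rw [card_filter_mem, card_filter_mem] at hall
  linear_combination hsdiff - Fintype.card F * hsingular + hall

theorem IsElliptic.card_singularVectors_perp (hQ : IsElliptic Q n)
    (hU : TotallySingular Q U) {d : ℕ} (hd : finrank F U + d = n) :
    #(singularVectors Q (perp Q U)) + Fintype.card F ^ (n + 1) =
      Fintype.card F ^ n + Fintype.card F ^ (n + d + 1) := by
  induction d generalizing U with
  | zero =>
    have hg : IsGenerator Q n U := ⟨hU, hd⟩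
    rw [hg.singularVectors_perp hQ.hasWittIndex, hU.card_singularVectors, hg.2, add_zero]
  | succ d ih =>
    obtain ⟨g, hg, hUg⟩ := hU.exists_isGenerator_ge hQ.nondegenerate hQ.hasWittIndex
    have hlt : U < g := lt_of_le_of_ne hUg (by rintro rfl; have := hg.2; omega)
    obtain ⟨e, heg, heU⟩ := SetLike.exists_of_lt hlt
    have heperp : e ∈ perp Q U := perp_anti hUg (hg.1.le_perp heg)
    have rank_sup := Submodule.finrank_sup_span_singleton heU
    have rank_perp := finrank_perp_add_finrank hQ.nondegenerate U
    have rank_perp_sup := finrank_perp_add_finrank hQ.nondegenerate (U ⊔ F ∙ e)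
    have hcount := card_mul_card_singularVectors (hg.1 e heg) heperp
    have hsup := ih (hU.sup_span_singleton (hg.1 e heg) heperp) (by omega)
    rw [hQ.finrank_eq] at rank_perp rank_perp_sup
    rw [← perp_sup, show finrank F (perp Q U) = n + d + 3 by omega,
      show finrank F (perp Q (U ⊔ F ∙ e)) = n + d + 2 by omega] at hcount
    refine Nat.eq_of_mul_eq_mul_left (Fintype.card_pos (α := F)) ?_
    linear_combination hcount + Fintype.card F * hsup

theorem IsElliptic.card_residualVectors (hQ : IsElliptic Q n)
    (hU : TotallySingular Q U) {d : ℕ} (hd : finrank F U + d = n) :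
    #(residualVectors Q U) + Fintype.card F ^ finrank F U + Fintype.card F ^ (n + 1) =
      Fintype.card F ^ n + Fintype.card F ^ (n + d + 1) := by
  classical
  rw [← hQ.card_singularVectors_perp hU hd, ← hU.card_singularVectors, residualVectors,
    card_sdiff_add_card_eq_card (singularVectors_mono hU.le_perp)]

/-! ### Averaging a function that sums to zero over every generator -/

section Averaging

variable {A : Type*} [CommRing A]

theorem sum_residualVectors_sum_sup (hU : TotallySingular Q U) (f : V → A) :
    ∑ y ∈ residualVectors Q U, ∑ u ∈ singularVectors Q (U ⊔ F ∙ y), f u =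
      #(residualVectors Q U) * ∑ u ∈ singularVectors Q U, f u +
        ((Fintype.card F : A) ^ (finrank F U + 1) - (Fintype.card F : A) ^ finrank F U) *
          ∑ u ∈ residualVectors Q U, f u := by
  refine sum_residualVectors_sum_singularVectors (fun y _ ↦ le_sup_left)
    (fun y hy ↦ sup_span_singleton_le hU.le_perp (mem_residualVectors.1 hy).1)
    (fun x hx y hy ↦ mem_sup_span_singleton_comm (mem_residualVectors.1 hy).2.2
      (mem_residualVectors.1 hx).2.2) (fun y hy ↦ ?_) f
  obtain ⟨hyperp, hQy, hyU⟩ := mem_residualVectors.1 hy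
  rw [(hU.sup_span_singleton hQy hyperp).card_singularVectors, hU.card_singularVectors,
    Submodule.finrank_sup_span_singleton hyU, Nat.cast_pow, Nat.cast_pow, add_sub_cancel]

theorem IsElliptic.sum_residualVectors_sum_perp_sup (hQ : IsElliptic Q n)
    (hU : TotallySingular Q U) {d : ℕ} (hd : finrank F U + (d + 1) = n) (f : V → A) :
    ∑ y ∈ residualVectors Q U, ∑ u ∈ singularVectors Q (perp Q (U ⊔ F ∙ y)), f u =
      #(residualVectors Q U) * ∑ u ∈ singularVectors Q U, f u +
        ((Fintype.card F : A) ^ n + (Fintype.card F : A) ^ (n + d + 1)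
          - (Fintype.card F : A) ^ (n + 1) - (Fintype.card F : A) ^ finrank F U) *
          ∑ u ∈ residualVectors Q U, f u := by
  have le_perp_sup {y : V} (hy : y ∈ residualVectors Q U) : U ≤ perp Q (U ⊔ F ∙ y) :=
    le_perp_comm.1 (sup_span_singleton_le hU.le_perp (mem_residualVectors.1 hy).1)
  refine sum_residualVectors_sum_singularVectors (fun y hy ↦ le_perp_sup hy)
    (fun y _ ↦ perp_anti le_sup_left) (fun x hx y hy ↦ ?_) (fun y hy ↦ ?_) f
  · rw [perp_sup, perp_sup, Submodule.mem_inf, Submodule.mem_inf, mem_perp_span_singleton,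
      mem_perp_span_singleton, QuadraticMap.polar_comm, and_iff_right (mem_residualVectors.1 hx).1,
      and_iff_right (mem_residualVectors.1 hy).1]
  · obtain ⟨hyperp, hQy, hyU⟩ := mem_residualVectors.1 hy
    have rank_sup := Submodule.finrank_sup_span_singleton hyU
    have hcount := congrArg (Nat.cast : ℕ → A) <|
      hQ.card_singularVectors_perp (d := d) (hU.sup_span_singleton hQy hyperp) (by omega)
    rw [hU.card_singularVectors]
    push_cast at hcount ⊢
    linear_combination hcount

-- Summing the claim for `U + ⟨y⟩` over all residual vectors `y` gives a linear relation between the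
-- sums over `U` and over the residual vectors, with nonzero coefficients.
theorem IsElliptic.sum_singularVectors_perp [IsDomain A] [CharZero A] (hQ : IsElliptic Q n)
    {f : V → A} (hf : ∀ g, IsGenerator Q n g → ∑ u ∈ singularVectors Q g, f u = 0)
    (hU : TotallySingular Q U) {d : ℕ} (hd : finrank F U + d = n) :
    ∑ u ∈ singularVectors Q (perp Q U), f u =
      -(Fintype.card F : A) ^ (d + 1) * ∑ u ∈ singularVectors Q U, f u := by
  classical
  induction d generalizing U with
  | zero =>
    have hg : IsGenerator Q n U := ⟨hU, hd⟩
    rw [hg.singularVectors_perp hQ.hasWittIndex, hf U hg, mul_zero]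
  | succ d ih =>
    have hsum : ∑ y ∈ residualVectors Q U, ∑ u ∈ singularVectors Q (perp Q (U ⊔ F ∙ y)), f u =
        -(Fintype.card F : A) ^ (d + 1) *
          ∑ y ∈ residualVectors Q U, ∑ u ∈ singularVectors Q (U ⊔ F ∙ y), f u := by
      rw [mul_sum]
      refine sum_congr rfl fun y hy ↦ ?_
      obtain ⟨hyperp, hQy, hyU⟩ := mem_residualVectors.1 hy
      have rank_sup := Submodule.finrank_sup_span_singleton hyU
      exact ih (hU.sup_span_singleton hQy hyperp) (by omega)
    rw [hQ.sum_residualVectors_sum_perp_sup hU hd, sum_residualVectors_sum_sup hU] at hsum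
    have hcount := congrArg (Nat.cast : ℕ → A) (hQ.card_residualVectors hU hd)
    have hne : (Fintype.card F : A) ^ finrank F U * ((Fintype.card F ^ (d + 1)) ^ 2 - 1) ≠ 0 := by
      refine mul_ne_zero (pow_ne_zero _ (by simp)) (sub_ne_zero.2 ?_)
      exact_mod_cast (Nat.one_lt_pow two_ne_zero
        (Nat.one_lt_pow d.succ_ne_zero Fintype.one_lt_card)).ne'
    rw [← sum_sdiff (singularVectors_mono hU.le_perp), ← residualVectors]
    refine mul_left_cancel₀ hne ?_
    subst hd
    push_cast at hcount
    linear_combination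
      hsum - (1 + Fintype.card F ^ (d + 1)) * (∑ u ∈ singularVectors Q U, f u) * hcount

end Averaging

end Counting

/-! ### Weights on points -/

section Weight

variable {A : Type*} [CommRing A]

variable (F) in
/-- A function on points of the projective space of `V`, encoded as a function on vectors which is
constant on nonzero multiples and vanishes at `0`. -/
structure IsPointWeight (f : V → A) : Prop where
  map_zero : f 0 = 0
  map_smul : ∀ c : F, c ≠ 0 → ∀ x, f (c • x) = f x

open Classical in
/-- A weight on the singular points of `Q` with total weight `0` on every generator. -/
structure IsNullWeight (Q : QuadraticForm F V) (n : ℕ) (f : V → A) : Prop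
    extends IsPointWeight F f where
  map_eq_zero : ∀ x, Q x ≠ 0 → f x = 0
  sum_generator : ∀ g, IsGenerator Q n g → ∑ u with u ∈ g, f u = 0

open Classical in
/-- The sum of `f` over the vectors orthogonal to `x`: the collinearity operator of the polar
space, in terms of vectors. -/
def perpSum (Q : QuadraticForm F V) (f : V → A) (x : V) : A :=
  ∑ u with QuadraticMap.polar Q x u = 0, f u

theorem sum_perpSum_mul (f g : V → A) :
    ∑ x, perpSum Q f x * g x = ∑ x, f x * perpSum Q g x := by
  classical
  simp only [perpSum, sum_filter, sum_mul, mul_sum, ite_mul, zero_mul, mul_ite, mul_zero]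
  rw [sum_comm]
  simp only [QuadraticMap.polar_comm Q]

open Classical in
theorem IsNullWeight.sum_singularVectors {f : V → A} (hf : IsNullWeight Q n f) (W : Submodule F V) :
    ∑ u ∈ singularVectors Q W, f u = ∑ u with u ∈ W, f u := by
  rw [singularVectors, ← filter_filter]
  exact sum_filter_of_ne fun x _ ↦ not_imp_comm.1 (hf.map_eq_zero x)

open Classical in
theorem sum_filter_mem_span_singleton [Fintype F] {f : V → A} (hf : IsPointWeight F f)
    {x : V} (hx : x ≠ 0) : ∑ u with u ∈ F ∙ x, f u = ((Fintype.card F : A) - 1) * f x := by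
  have himage : ({u | u ∈ F ∙ x} : Finset V) = univ.image fun c : F ↦ c • x := by
    ext u
    simp [Submodule.mem_span_singleton]
  rw [himage, sum_image fun c _ d _ h ↦ smul_left_injective F hx h,
    ← add_sum_erase univ _ (mem_univ (0 : F)), zero_smul, hf.map_zero, zero_add,
    sum_congr rfl fun c hc ↦ hf.map_smul c (ne_of_mem_erase hc) x, sum_const,
    card_erase_of_mem (mem_univ _), nsmul_eq_mul, card_univ, Nat.cast_pred Fintype.card_pos]

open Classical in
theorem card_filter_polar_eq_zero_and [Fintype F] {k : ℕ} (hV : finrank F V = k + 2)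
    (hQ : (QuadraticMap.polarBilin Q).Nondegenerate) {w : V} (hw : w ≠ 0) (u : V) :
    #{x | QuadraticMap.polar Q w x = 0 ∧ QuadraticMap.polar Q u x = 0} =
      Fintype.card F ^ (if u ∈ F ∙ w then k + 1 else k) := by
  have hfilter : ({x | QuadraticMap.polar Q w x = 0 ∧ QuadraticMap.polar Q u x = 0} : Finset V) =
      ({x | x ∈ perp Q (F ∙ w ⊔ F ∙ u)} : Finset V) := by
    simp only [perp_sup, Submodule.mem_inf, mem_perp_span_singleton]
  rw [hfilter, card_filter_mem]
  congr 1
  have rank_perp := finrank_perp_add_finrank hQ (F ∙ w ⊔ F ∙ u)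
  have rank_w : finrank F (F ∙ w) = 1 := finrank_span_singleton hw
  split_ifs with hu
  · rw [sup_eq_left.2 ((Submodule.span_singleton_le_iff_mem _ _).2 hu)] at rank_perp ⊢
    omega
  · have rank_sup := Submodule.finrank_sup_span_singleton hu
    omega

theorem perpSum_perpSum [Fintype F] {k : ℕ} (hV : finrank F V = k + 2)
    (hQ : (QuadraticMap.polarBilin Q).Nondegenerate) {f : V → A} (hf : IsPointWeight F f)
    (hsum : ∑ x, f x = 0) {w : V} (hw : w ≠ 0) :
    perpSum Q (perpSum Q f) w =
      (Fintype.card F : A) ^ k * ((Fintype.card F : A) - 1) ^ 2 * f w := by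
  classical
  have hcard (u : V) :
      (#{x | QuadraticMap.polar Q w x = 0 ∧ QuadraticMap.polar Q u x = 0} : A) =
        Fintype.card F ^ k + if u ∈ F ∙ w then Fintype.card F ^ k * ((Fintype.card F : A) - 1)
          else 0 := by
    rw [card_filter_polar_eq_zero_and hV hQ hw]
    split_ifs
    · push_cast
      ring
    · rw [Nat.cast_pow, add_zero]
  calc perpSum Q (perpSum Q f) w
      = ∑ u, ∑ x with QuadraticMap.polar Q w x = 0 ∧ QuadraticMap.polar Q u x = 0, f u :=
        sum_comm' fun x u ↦ by simp [QuadraticMap.polar_comm Q x u]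
    _ = ∑ u, (Fintype.card F ^ k * f u + Fintype.card F ^ k * ((Fintype.card F : A) - 1) *
          if u ∈ F ∙ w then f u else 0) :=
        sum_congr rfl fun u _ ↦ by rw [sum_const, nsmul_eq_mul, hcard u]; split_ifs <;> ring
    _ = Fintype.card F ^ k * ((Fintype.card F : A) - 1) ^ 2 * f w := by
        rw [sum_add_distrib, ← mul_sum, hsum, ← mul_sum, ← sum_filter,
          sum_filter_mem_span_singleton hf hw]
        ring

theorem sum_perpSum_add_smul [Fintype F] {N : V} {f : V → A}
    (hN : ∀ u, QuadraticMap.polar Q N u = 0 → f u = 0) (v : V) :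
    ∑ t : F, perpSum Q f (v + t • N) = ∑ u, f u := by
  classical
  have hcard (u : V) (hu : f u ≠ 0) : #{t : F | QuadraticMap.polar Q (v + t • N) u = 0} = 1 := by
    have hNu : QuadraticMap.polar Q N u ≠ 0 := mt (hN u) hu
    refine card_eq_one.2 ⟨-QuadraticMap.polar Q v u / QuadraticMap.polar Q N u, ?_⟩
    ext t
    rw [mem_filter_univ, mem_singleton, QuadraticMap.polar_add_left, QuadraticMap.polar_smul_left,
      eq_div_iff hNu, smul_eq_mul, add_comm, add_eq_zero_iff_eq_neg]
  calc ∑ t : F, perpSum Q f (v + t • N)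
      = ∑ u, ∑ t : F with QuadraticMap.polar Q (v + t • N) u = 0, f u :=
        sum_comm' fun t u ↦ by simp
    _ = ∑ u, f u := sum_congr rfl fun u _ ↦ by
        obtain hu | hu := eq_or_ne (f u) 0
        · rw [hu, sum_const_zero]
        · rw [sum_const, hcard u hu, one_smul]

namespace IsNullWeight

variable {f : V → A}

open Classical in
theorem sum_perp [Fintype F] [IsDomain A] [CharZero A] (hQ : IsElliptic Q n)
    (hf : IsNullWeight Q n f) (hU : TotallySingular Q U) {d : ℕ} (hd : finrank F U + d = n) :
    ∑ u with u ∈ perp Q U, f u = -(Fintype.card F : A) ^ (d + 1) * ∑ u with u ∈ U, f u := by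
  rw [← hf.sum_singularVectors, ← hf.sum_singularVectors]
  exact hQ.sum_singularVectors_perp
    (fun g hg ↦ (hf.sum_singularVectors g).trans (hf.sum_generator g hg)) hU hd

theorem sum_eq_zero [Finite F] [IsDomain A] [CharZero A] (hQ : IsElliptic Q n)
    (hf : IsNullWeight Q n f) : ∑ x, f x = 0 := by
  classical
  cases nonempty_fintype F
  have hbot : TotallySingular Q ⊥ := fun v hv ↦ by
    rw [(Submodule.mem_bot F).1 hv, QuadraticMap.map_zero]
  have := hf.sum_perp hQ hbot (d := n) (by rw [finrank_bot, zero_add])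
  have hzero : ∑ u with u ∈ (⊥ : Submodule F V), f u = 0 := Finset.sum_eq_zero fun u hu ↦ by
    rw [(Submodule.mem_bot F).1 (mem_filter.1 hu).2, hf.map_zero]
  simpa only [hzero, mul_zero, perp_bot, Submodule.mem_top, filter_true] using this

theorem perpSum_of_singular [Fintype F] [IsDomain A] [CharZero A] (hQ : IsElliptic Q n)
    (hf : IsNullWeight Q n f) {x : V} (hx : x ≠ 0) (hQx : Q x = 0) :
    perpSum Q f x = -((Fintype.card F : A) ^ n * ((Fintype.card F : A) - 1)) * f x := by
  classical
  have hspan := totallySingular_span_singleton hQx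
  have rank_span : finrank F (F ∙ x) = 1 := finrank_span_singleton hx
  have hn : 1 ≤ n := rank_span ▸ hQ.hasWittIndex.1 _ hspan
  have := hf.sum_perp hQ hspan (d := n - 1) (by omega)
  simp only [mem_perp_span_singleton] at this
  rw [perpSum, this, sum_filter_mem_span_singleton hf.toIsPointWeight hx, Nat.sub_add_cancel hn]
  ring

variable [LinearOrder A] [IsStrictOrderedRing A]

-- `perpSum Q f + c f` has norm zero: the operator is self-adjoint and its square is `c²`.
theorem perpSum_eq [Fintype F] (hQ : IsElliptic Q n) (hf : IsNullWeight Q n f) (x : V) :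
    perpSum Q f x = -((Fintype.card F : A) ^ n * ((Fintype.card F : A) - 1)) * f x := by
  set c := (Fintype.card F : A) ^ n * ((Fintype.card F : A) - 1)
  have mul_perpSum (y : V) : f y * perpSum Q f y = -c * f y ^ 2 := by
    obtain hy | hy := eq_or_ne (f y) 0
    · rw [hy]
      ring
    · have hy0 : y ≠ 0 := fun h ↦ hy (h ▸ hf.map_zero)
      rw [hf.perpSum_of_singular hQ hy0 (not_imp_comm.1 (hf.map_eq_zero y) hy)]
      ring
  have mul_perpSum_perpSum (y : V) : f y * perpSum Q (perpSum Q f) y = c ^ 2 * f y ^ 2 := by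
    obtain rfl | hy0 := eq_or_ne y 0
    · rw [hf.map_zero]
      ring
    · rw [perpSum_perpSum hQ.finrank_eq hQ.nondegenerate hf.toIsPointWeight (hf.sum_eq_zero hQ) hy0]
      ring
  have hsq : ∑ y, (perpSum Q f y + c * f y) ^ 2 = 0 := by
    calc ∑ y, (perpSum Q f y + c * f y) ^ 2
        = ∑ y, perpSum Q f y * perpSum Q f y + 2 * c * ∑ y, f y * perpSum Q f y +
            c ^ 2 * ∑ y, f y ^ 2 := by
          simp only [mul_sum, ← sum_add_distrib]
          exact sum_congr rfl fun y _ ↦ by ring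
      _ = 0 := by
          simp only [sum_perpSum_mul f, mul_perpSum, mul_perpSum_perpSum, ← mul_sum]
          ring
  have hx := (sum_eq_zero_iff_of_nonneg fun y _ ↦ sq_nonneg _).1 hsq x (mem_univ x)
  linear_combination pow_eq_zero_iff two_ne_zero |>.1 hx

theorem sum_add_smul [Fintype F] (hQ : IsElliptic Q n) (hf : IsNullWeight Q n f) {N : V}
    (hN : ∀ u, QuadraticMap.polar Q N u = 0 → f u = 0) (v : V) :
    ∑ t : F, f (v + t • N) = 0 := by
  have hc : (Fintype.card F : A) ^ n * ((Fintype.card F : A) - 1) ≠ 0 := by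
    refine mul_ne_zero (pow_ne_zero _ (by simp)) (sub_ne_zero.2 ?_)
    exact_mod_cast Fintype.one_lt_card.ne'
  have := sum_perpSum_add_smul hN v
  simp only [hf.perpSum_eq hQ, ← mul_sum, hf.sum_eq_zero hQ] at this
  exact (mul_eq_zero.1 this).resolve_left (neg_ne_zero.2 hc)

-- A line `v + F N` with `N` not orthogonal to `v` contains at most two singular vectors.
theorem exists_map_eq_neg [Finite F] (hQ : IsElliptic Q n) (hf : IsNullWeight Q n f) {N : V}
    (hN : ∀ u, QuadraticMap.polar Q N u = 0 → f u = 0) {v : V} (hv : f v ≠ 0) :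
    ∃ w, f w = -f v := by
  cases nonempty_fintype F
  have hsum := hf.sum_add_smul hQ hN v
  obtain ⟨s, hs0, hs⟩ : ∃ s : F, s ≠ 0 ∧ f (v + s • N) ≠ 0 := by
    by_contra! h
    rw [Fintype.sum_eq_single 0 h, zero_smul, add_zero] at hsum
    exact hv hsum
  have hroot {t : F} (ht0 : t ≠ 0) (ht : f (v + t • N) ≠ 0) :
      t * Q N + QuadraticMap.polar Q N v = 0 := by
    have hQt : Q (v + t • N) = 0 := not_imp_comm.1 (hf.map_eq_zero _) ht
    rw [QuadraticMap.map_add Q, not_imp_comm.1 (hf.map_eq_zero v) hv, QuadraticMap.map_smul,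
      QuadraticMap.polar_smul_right, QuadraticMap.polar_comm, smul_eq_mul, smul_eq_mul] at hQt
    exact (mul_eq_zero.1 (by linear_combination hQt)).resolve_left ht0
  have hQN : Q N ≠ 0 := fun h ↦ hv (hN v (by simpa [h] using hroot hs0 hs))
  have hunique (t : F) (ht : t ≠ 0 ∧ t ≠ s) : f (v + t • N) = 0 := by
    by_contra hft
    exact ht.2 (mul_right_cancel₀ hQN (by linear_combination hroot ht.1 hft - hroot hs0 hs))
  rw [Fintype.sum_eq_add 0 s hs0.symm hunique, zero_smul, add_zero] at hsum
  exact ⟨_, eq_neg_of_add_eq_zero_right hsum⟩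

end IsNullWeight

end Weight

end Finite

/-! ### The weight of a relative ovoid -/

section Points

theorem isSingularPoint_span_singleton {Q : QuadraticForm F V} {x : V} :
    IsSingularPoint Q (F ∙ x) ↔ x ≠ 0 ∧ Q x = 0 := by
  refine ⟨?_, fun hx ↦ ⟨x, hx.1, hx.2, rfl⟩⟩
  rintro ⟨v, hv0, hQv, hxv⟩
  refine ⟨?_, totallySingular_span_singleton hQv x (hxv ▸ Submodule.mem_span_singleton_self x)⟩
  rintro rfl
  exact hv0 (Submodule.span_singleton_eq_bot.1 (hxv.symm.trans (Submodule.span_zero_singleton F)))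

theorem IsSingularPoint.finrank_eq_one {Q : QuadraticForm F V} {P : Submodule F V}
    (hP : IsSingularPoint Q P) : finrank F P = 1 := by
  obtain ⟨v, hv0, -, rfl⟩ := hP
  exact finrank_span_singleton hv0

/-- The singular points of `Q` outside the subspace `H`. -/
def outerPoints (Q : QuadraticForm F V) (H : Submodule F V) : Set (Submodule F V) :=
  {P | IsSingularPoint Q P ∧ ¬ P ≤ H}

theorem span_singleton_mem_outerPoints {Q : QuadraticForm F V} {H : Submodule F V} {x : V} :
    F ∙ x ∈ outerPoints Q H ↔ Q x = 0 ∧ x ∉ H := by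
  rw [outerPoints, Set.mem_ofPred_eq, isSingularPoint_span_singleton,
    Submodule.span_singleton_le_iff_mem]
  have hx0 : x ∉ H → x ≠ 0 := fun hx h ↦ hx (h ▸ H.zero_mem)
  tauto

theorem finrank_inf_add_one_of_not_le [FiniteDimensional F V] {g H : Submodule F V}
    (hH : finrank F H + 1 = finrank F V) (hg : ¬ g ≤ H) :
    finrank F ↥(g ⊓ H) + 1 = finrank F g := by
  have rank_lt := Submodule.finrank_lt_finrank_of_lt (right_lt_sup.2 hg)
  have rank_le := Submodule.finrank_le (g ⊔ H)
  have rank_sup := Submodule.finrank_sup_add_finrank_inf_eq g H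
  omega

open Classical in
/-- The indicator function of a set of points, as a function on vectors. -/
def pointIndicator (T : Set (Submodule F V)) (x : V) : ℤ :=
  if F ∙ x ∈ T then 1 else 0

theorem pointIndicator_smul (T : Set (Submodule F V)) {c : F} (hc : c ≠ 0) (x : V) :
    pointIndicator T (c • x) = pointIndicator T x := by
  rw [pointIndicator, pointIndicator, Submodule.span_singleton_smul_eq hc.isUnit]

end Points

section PointCount

open Finset

variable [Fintype F] [Fintype V] {T : Set (Submodule F V)}

open Classical in
theorem card_filter_span_singleton_eq {P : Submodule F V} (hP : finrank F P = 1) :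
    #{u | F ∙ u = P} = Fintype.card F - 1 := by
  have hfilter : ({u | F ∙ u = P} : Finset V) = ({u | u ∈ P} : Finset V).erase 0 := by
    ext u
    rw [mem_filter_univ, mem_erase, mem_filter_univ]
    refine ⟨?_, fun hu ↦ (eq_span_singleton_of_mem_of_finrank_eq_one hP hu.2 hu.1).symm⟩
    rintro rfl
    exact ⟨fun h ↦ by
      rw [h, Submodule.span_zero_singleton, finrank_bot] at hP
      exact zero_ne_one hP, Submodule.mem_span_singleton_self u⟩
  rw [hfilter, card_erase_of_mem (by simp), card_filter_mem, hP, pow_one]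

open Classical in
theorem sum_pointIndicator (hT : ∀ P ∈ T, finrank F P = 1) (W : Submodule F V) :
    ∑ u with u ∈ W, pointIndicator T u =
      ((Fintype.card F : ℤ) - 1) * {P ∈ T | P ≤ W}.ncard := by
  set vectors : Finset V := {u | u ∈ W ∧ F ∙ u ∈ T} with hvectors
  have hmaps : Set.MapsTo (fun u : V ↦ F ∙ u) (vectors : Set V)
      ({P ∈ T | P ≤ W}.toFinset : Finset (Submodule F V)) := fun u hu ↦ by
    rw [hvectors, mem_coe, mem_filter_univ] at hu
    rw [mem_coe, Set.mem_toFinset]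
    exact ⟨hu.2, (Submodule.span_singleton_le_iff_mem _ _).2 hu.1⟩
  have hfibre : ∀ P ∈ {P ∈ T | P ≤ W}.toFinset,
      #{u ∈ vectors | F ∙ u = P} = Fintype.card F - 1 := by
    intro P hP
    rw [Set.mem_toFinset] at hP
    rw [← card_filter_span_singleton_eq (V := V) (hT P hP.1), hvectors, filter_filter]
    congr 1
    refine filter_congr fun u _ ↦ and_iff_right_of_imp ?_
    rintro rfl
    exact ⟨(Submodule.span_singleton_le_iff_mem _ _).1 hP.2, hP.1⟩
  have hcard := card_eq_sum_card_fiberwise hmaps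
  rw [sum_congr rfl hfibre, sum_const, ← Set.ncard_eq_toFinset_card', smul_eq_mul] at hcard
  simp only [pointIndicator]
  rw [← sum_filter, filter_filter, ← hvectors, sum_const, hcard, nsmul_one, Nat.cast_mul,
    Nat.cast_pred Fintype.card_pos, mul_comm]

open Classical in
theorem TotallySingular.sum_pointIndicator_outerPoints {Q : QuadraticForm F V}
    {g H : Submodule F V} (hg : TotallySingular Q g) (hH : finrank F H + 1 = finrank F V)
    (hgH : ¬ g ≤ H) :
    ∑ u with u ∈ g, pointIndicator (outerPoints Q H) u =
      ((Fintype.card F : ℤ) - 1) * (Fintype.card F : ℤ) ^ (finrank F g - 1) := by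
  have hsub : ({u | u ∈ g ⊓ H} : Finset V) ⊆ ({u | u ∈ g} : Finset V) :=
    monotone_filter_right _ fun u _ hu ↦ hu.1
  have hfilter : ({u ∈ ({u | u ∈ g} : Finset V) | F ∙ u ∈ outerPoints Q H} : Finset V) =
      ({u | u ∈ g} : Finset V) \ ({u | u ∈ g ⊓ H} : Finset V) := by
    ext u
    rw [mem_filter, mem_sdiff, mem_filter_univ, mem_filter_univ, span_singleton_mem_outerPoints,
      Submodule.mem_inf]
    have := hg u
    tauto
  simp only [pointIndicator]
  rw [← sum_filter, hfilter, sum_const, nsmul_one, cast_card_sdiff hsub, card_filter_mem,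
    card_filter_mem, ← finrank_inf_add_one_of_not_le hH hgH, Nat.add_sub_cancel]
  push_cast
  ring

end PointCount

section RelativeOvoid

open Finset

/-- The weight `q^(n-1) 1_R - m 1_S` on points, where `S` consists of the singular points outside
`H`. It has total weight `0` on every generator when `R` is a relative `m`-ovoid. -/
def ovoidWeight [Fintype F] (Q : QuadraticForm F V) (n : ℕ) (H : Submodule F V) (m : ℕ)
    (R : Set (Submodule F V)) (x : V) : ℤ :=
  (Fintype.card F : ℤ) ^ (n - 1) * pointIndicator R x - m * pointIndicator (outerPoints Q H) x

variable {Q : QuadraticForm F V} {n m : ℕ} {H : Submodule F V} {R : Set (Submodule F V)}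

theorem ovoidWeight_eq_or [Fintype F] {x : V} (hx : F ∙ x ∈ outerPoints Q H) :
    ovoidWeight Q n H m R x = (Fintype.card F : ℤ) ^ (n - 1) - m ∨
      ovoidWeight Q n H m R x = -m := by
  rw [ovoidWeight, pointIndicator, pointIndicator, if_pos hx, mul_one]
  split_ifs
  · exact .inl (by rw [mul_one])
  · exact .inr (by rw [mul_zero, zero_sub])

namespace IsRelativeMOvoid

theorem finrank_eq_one (hR : IsRelativeMOvoid Q n H m R) : ∀ P ∈ R, finrank F P = 1 :=
  fun P hP ↦ (hR.1 P hP).1.finrank_eq_one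

section Values

variable [Fintype F]

theorem ovoidWeight_eq_zero (hR : IsRelativeMOvoid Q n H m R) {x : V}
    (hx : F ∙ x ∉ outerPoints Q H) : ovoidWeight Q n H m R x = 0 := by
  rw [ovoidWeight, pointIndicator, pointIndicator, if_neg (mt (hR.1 _) hx), if_neg hx, mul_zero,
    mul_zero, sub_zero]

theorem two_mul_eq_of_ovoidWeight_eq_neg (hR : IsRelativeMOvoid Q n H m R) (hm0 : 0 < m)
    (hm1 : m < Fintype.card F ^ (n - 1)) {v w : V} (hv : F ∙ v ∈ outerPoints Q H)
    (hvw : ovoidWeight Q n H m R w = -ovoidWeight Q n H m R v) :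
    2 * m = Fintype.card F ^ (n - 1) := by
  zify at hm0 hm1 ⊢
  have hw : ovoidWeight Q n H m R w = 0 ∨
      ovoidWeight Q n H m R w = (Fintype.card F : ℤ) ^ (n - 1) - m ∨
      ovoidWeight Q n H m R w = -m :=
    or_iff_not_imp_left.2 fun h ↦ ovoidWeight_eq_or (not_imp_comm.1 hR.ovoidWeight_eq_zero h)
  have := ovoidWeight_eq_or (n := n) (m := m) (R := R) hv
  omega

variable [Fintype V]

open Classical in
theorem sum_generator_ovoidWeight (hR : IsRelativeMOvoid Q n H m R)
    (hH : finrank F H + 1 = finrank F V) {g : Submodule F V} (hg : IsGenerator Q n g) :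
    ∑ u with u ∈ g, ovoidWeight Q n H m R u = 0 := by
  by_cases hgH : g ≤ H
  · refine sum_eq_zero fun u hu ↦ hR.ovoidWeight_eq_zero fun h ↦ ?_
    exact (span_singleton_mem_outerPoints.1 h).2 (hgH ((mem_filter_univ u).1 hu))
  · simp only [ovoidWeight, sum_sub_distrib, ← mul_sum]
    rw [sum_pointIndicator hR.finrank_eq_one, hR.2 g hg hgH,
      hg.1.sum_pointIndicator_outerPoints hH hgH, hg.2]
    ring

theorem isNullWeight_ovoidWeight (hR : IsRelativeMOvoid Q n H m R)
    (hH : finrank F H + 1 = finrank F V) : IsNullWeight Q n (ovoidWeight Q n H m R) where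
  map_zero := hR.ovoidWeight_eq_zero fun h ↦ (span_singleton_mem_outerPoints.1 h).2 H.zero_mem
  map_smul c hc x := by
    rw [ovoidWeight, pointIndicator_smul _ hc, pointIndicator_smul _ hc, ovoidWeight]
  map_eq_zero x hx := hR.ovoidWeight_eq_zero fun h ↦ hx (span_singleton_mem_outerPoints.1 h).1
  sum_generator _ hg := hR.sum_generator_ovoidWeight hH hg

end Values

variable [Finite V]

theorem two_mul_eq [Fintype F] (hR : IsRelativeMOvoid Q n H m R) (hQ : IsElliptic Q n)
    (hH : finrank F H + 1 = finrank F V) (hm0 : 0 < m) (hm1 : m < Fintype.card F ^ (n - 1)) :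
    2 * m = Fintype.card F ^ (n - 1) := by
  cases nonempty_fintype V
  have hn : 0 < n := Nat.pos_of_ne_zero fun h ↦ by
    rw [h, pow_zero] at hm1
    omega
  have hH_top : H ≠ ⊤ := fun h ↦ by
    rw [h, finrank_top] at hH
    omega
  obtain ⟨N, rfl⟩ := exists_perp_span_singleton_eq hQ.nondegenerate hH
  obtain ⟨v, hv⟩ := hQ.exists_singular_notMem hn hH_top
  rw [← span_singleton_mem_outerPoints] at hv
  have hv0 : ovoidWeight Q n (perp Q (F ∙ N)) m R v ≠ 0 := by
    zify at hm0 hm1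
    have := ovoidWeight_eq_or (n := n) (m := m) (R := R) hv
    omega
  have hN (u : V) (hu : QuadraticMap.polar Q N u = 0) :
      ovoidWeight Q n (perp Q (F ∙ N)) m R u = 0 :=
    hR.ovoidWeight_eq_zero fun h ↦
      (span_singleton_mem_outerPoints.1 h).2 (mem_perp_span_singleton.2 hu)
  obtain ⟨w, hw⟩ := (hR.isNullWeight_ovoidWeight hH).exists_map_eq_neg hQ hN hv0
  exact hR.two_mul_eq_of_ovoidWeight_eq_neg hm0 hm1 hv hw

theorem mul_ncard_eq [Fintype F] (hR : IsRelativeMOvoid Q n H m R) (hQ : IsElliptic Q n)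
    (hH : finrank F H + 1 = finrank F V) :
    Fintype.card F ^ (n - 1) * R.ncard = m * (outerPoints Q H).ncard := by
  classical
  cases nonempty_fintype V
  have sum_eq {T : Set (Submodule F V)} (hT : ∀ P ∈ T, finrank F P = 1) :
      ∑ u, pointIndicator T u = ((Fintype.card F : ℤ) - 1) * T.ncard := by
    simpa using sum_pointIndicator hT ⊤
  have hsum := (hR.isNullWeight_ovoidWeight hH).sum_eq_zero hQ
  simp only [ovoidWeight, sum_sub_distrib, ← mul_sum] at hsum
  rw [sum_eq hR.finrank_eq_one, sum_eq fun P hP ↦ hP.1.finrank_eq_one] at hsum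
  have hq : (Fintype.card F : ℤ) - 1 ≠ 0 :=
    sub_ne_zero.2 (by exact_mod_cast Fintype.one_lt_card.ne')
  zify
  exact mul_left_cancel₀ hq (by linear_combination hsum)

theorem ncard_eq_of_two_mul_eq [Fintype F] (hR : IsRelativeMOvoid Q n H m R)
    (hQ : IsElliptic Q n) (hH : finrank F H + 1 = finrank F V)
    (hm : 2 * m = Fintype.card F ^ (n - 1)) : R.ncard = (outerPoints Q H \ R).ncard := by
  have hmul := hR.mul_ncard_eq hQ hH
  have hpos : 0 < Fintype.card F ^ (n - 1) := pow_pos Fintype.card_pos _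
  have hhalf : 2 * R.ncard = (outerPoints Q H).ncard :=
    Nat.eq_of_mul_eq_mul_left (by omega : 0 < m) (by rw [← hmul, ← hm]; ring)
  have hsub : R ⊆ outerPoints Q H := hR.1
  have hsdiff := Set.ncard_sdiff_add_ncard_of_subset hsub (Set.toFinite _)
  omega

end IsRelativeMOvoid

theorem statement_8_general
    (q n : ℕ) [Fintype F] (hq : Fintype.card F = q)
    (hV : finrank F V = 2 * n + 2)
    (Q : QuadraticForm F V) (hQnd : Nondeg Q) (hQw : HasWittIndex Q n)
    (H : Submodule F V) (hH : finrank F H = 2 * n + 1)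
    (m : ℕ) (R : Set (Submodule F V)) (hR : IsRelativeMOvoid Q n H m R)
    (hm0 : 0 < m) (hm1 : m < q ^ (n - 1)) :
    Even q ∧ 2 * m = q ^ (n - 1) ∧
      R.ncard = {P : Submodule F V | IsSingularPoint Q P ∧ ¬ P ≤ H ∧ P ∉ R}.ncard := by
  subst hq
  have hQ : IsElliptic Q n := ⟨hV, hQnd.nondegenerate_polarBilin hV hQw, hQw⟩
  have := hQ.finiteDimensional
  have : Finite V := Module.finite_of_finite F
  have hyperplane : finrank F H + 1 = finrank F V := by omega
  have hm : 2 * m = Fintype.card F ^ (n - 1) := hR.two_mul_eq hQ hyperplane hm0 hm1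
  have hcompl : {P : Submodule F V | IsSingularPoint Q P ∧ ¬ P ≤ H ∧ P ∉ R} =
      outerPoints Q H \ R :=
    Set.ext fun P ↦ and_assoc.symm
  refine ⟨(Nat.even_pow.1 (hm ▸ even_two_mul m)).1, hm, ?_⟩
  rw [hcompl]
  exact hR.ncard_eq_of_two_mul_eq hQ hyperplane hm

end RelativeOvoid

/-- A proper relative `m`-ovoid (with `0 < m < q^{n−1}`) forces `q` even and
`2m = q^{n−1}`; in particular it is a relative hemisystem. -/
theorem statement_8
    (q n : ℕ) [Fintype F] (hq : Fintype.card F = q) (hn : 2 ≤ n)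
    (hV : finrank F V = 2 * n + 2)
    (Q : QuadraticForm F V) (hQnd : Nondeg Q) (hQw : HasWittIndex Q n)
    (H : Submodule F V) (hH : finrank F H = 2 * n + 1) (hHnd : NondegOn Q H)
    (m : ℕ) (R : Set (Submodule F V)) (hR : IsRelativeMOvoid Q n H m R)
    (hm0 : 0 < m) (hm1 : m < q ^ (n - 1)) :
    Even q ∧ 2 * m = q ^ (n - 1) ∧
      R.ncard = {P : Submodule F V | IsSingularPoint Q P ∧ ¬ P ≤ H ∧ P ∉ R}.ncard :=
  statement_8_general q n hq hV Q hQnd hQw H hH m R hR hm0 hm1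
end
end

section
/- Let q be an even prime power and n ≥ 2. Then the set of singular points of Q⁻(4n+1,q) not contained in H can be partitioned into two relative hemisystems with respect to the parabolic section 𝒬 = Q(4n,q); in particular there exists a relative (q^{2n−1}/2)-ovoid of Q⁻(4n+1,q) with respect to 𝒬. -/
noncomputable section

open Module

variable {F V : Type*} [Field F] [AddCommGroup V] [Module F V]

/-!
Write `B` for the polar form and call `℘ a = a ^ 2 - a` the Artin–Schreier map, whose range has
index two in `F`. The hyperplane is `H = N^⊥` for its nucleus `N`, normalised by `Q N = 1`. Fix
`δ` outside the range of `℘` and a vector `v₀` with `B N v₀ = 1`. The dimension of `⟨N, v₀⟩^⊥` is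
divisible by four, so `B` admits a self-adjoint endomorphism `J` with `J ^ 2 = J + δ` on it,
extended by zero on `⟨N, v₀⟩`. Scale singular vectors outside `H` to `B x N = 1` and sort them
according to whether `φ x = Q (J x) + δ B x v₀` lies in the range of `℘`. Since
`φ (x + N) = φ x + δ`, translation by `N` exchanges the two classes.

For a generator `g` not contained in `H`, the radical `R` of the alternating form `B (J x) y` on
`g ∩ H` has odd dimension. Choose `v ∈ g` with `B v N = 1` and put `T r = J r - B v (J r) N`; then
`φ (x + r) - φ x ≡ Q (T r)` modulo the range of `℘` for `r ∈ R`. If `Q ∘ T` vanished on `R`, the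
maximality of `g` would force `T R ⊆ R`, and there `T ^ 2 = T + δ` makes `R` a vector space over a
quadratic extension of `F`, contradicting the parity. So `Q (T r) = δ` for some `r ∈ R`, and
translation by `r` exchanges the two classes within `g`.
-/

open LinearMap (BilinForm)
open QuadraticMap (polar)
open Submodule (span)

section ArtinSchreier

variable (F) (p : ℕ) [Fact p.Prime] [CharP F p]

/-- The Artin–Schreier endomorphism `a ↦ a ^ p - a` of the additive group of a field of
characteristic `p`. -/
def artinSchreier : F →+ F :=
  (frobenius F p : F →+ F) - AddMonoidHom.id F

@[simp]
theorem artinSchreier_apply (a : F) : artinSchreier F p a = a ^ p - a :=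
  rfl

theorem natCard_ker_artinSchreier : Nat.card (artinSchreier F p).ker = p := by
  have ker_eq_primeField : ((artinSchreier F p).ker : Set F) = (⊥ : Subfield F) := by
    ext a
    simp [AddMonoidHom.mem_ker, sub_eq_zero, Subfield.mem_bot_iff_pow_eq_self F p]
  exact (congrArg Set.ncard ker_eq_primeField).trans (Subfield.card_bot F p)

theorem index_range_artinSchreier [Finite F] : (artinSchreier F p).range.index = p := by
  have ker_index := (artinSchreier F p).ker.card_mul_index
  rw [AddSubgroup.index_ker, natCard_ker_artinSchreier] at ker_index
  refine Nat.eq_of_mul_eq_mul_left (Nat.card_pos (α := (artinSchreier F p).range)) ?_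
  rw [AddSubgroup.card_mul_index, ← ker_index, mul_comm]

theorem exists_notMem_range_artinSchreier [Finite F] : ∃ δ, δ ∉ (artinSchreier F p).range := by
  by_contra! surjective
  have index_eq := index_range_artinSchreier F p
  rw [AddSubgroup.eq_top_iff' _ |>.2 surjective, AddSubgroup.index_top] at index_eq
  exact (Fact.out : p.Prime).one_lt.ne index_eq

end ArtinSchreier

section QuadraticEndomorphism

open Polynomial

theorem natDegree_dvd_finrank_of_aeval_eq_zero {p : F[X]} (hp : Irreducible p) {T : End F V}
    (hT : aeval T p = 0) : p.natDegree ∣ finrank F V := by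
  have : Fact (Irreducible p) := ⟨hp⟩
  have torsion : IsTorsionBySet F[X] (AEval' T) (Ideal.span {p}) := by
    rwa [← isTorsionBySet_iff_is_torsion_by_span, isTorsionBySet_singleton_iff, IsTorsionBy,
      ← mem_annihilator, AEval.annihilator_eq_ker_aeval, RingHom.mem_ker]
  let : Module (AdjoinRoot p) (AEval' T) := torsion.module
  have : IsScalarTower F (AdjoinRoot p) (AEval' T) := torsion.isScalarTower
  rw [(AEval'.of T).finrank_eq, ← finrank_mul_finrank F (AdjoinRoot p) (AEval' T),
    (AdjoinRoot.powerBasis hp.ne_zero).finrank, AdjoinRoot.powerBasis_dim]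
  exact dvd_mul_right _ _

theorem even_finrank_of_mul_self_eq {δ : F} (hδ : ∀ a : F, a ^ 2 - a ≠ δ) {T : End F V}
    (hT : T * T = T + δ • 1) : Even (finrank F V) := by
  let p : F[X] := X ^ 2 - X - C δ
  have natDegree_eq : p.natDegree = 2 := by simp only [p]; compute_degree!
  have irreducible : Irreducible p := by
    rw [irreducible_iff_roots_eq_zero_of_degree_le_three (by lia) (by lia),
      Multiset.eq_zero_iff_forall_notMem]
    intro a ha
    have root := (mem_roots'.1 ha).2
    simp only [p, IsRoot.def, eval_sub, eval_pow, eval_X, eval_C] at root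
    exact hδ a (sub_eq_zero.1 root)
  have annihilates : aeval T p = 0 := by
    simp [p, pow_two, hT, Algebra.algebraMap_eq_smul_one]
  exact even_iff_two_dvd.2
    (natDegree_eq ▸ natDegree_dvd_finrank_of_aeval_eq_zero irreducible annihilates)

theorem exists_mul_self_eq_of_even_finrank [FiniteDimensional F V] (δ : F)
    (hV : Even (finrank F V)) : ∃ T : End F V, T * T = T + δ • 1 := by
  obtain ⟨k, hk⟩ := hV
  let e : V ≃ₗ[F] (Fin k → F) × (Fin k → F) := LinearEquiv.ofFinrankEq _ _ (by simp [hk])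
  let fst := LinearMap.fst F (Fin k → F) (Fin k → F)
  let snd := LinearMap.snd F (Fin k → F) (Fin k → F)
  let companion : End F ((Fin k → F) × (Fin k → F)) := (δ • snd).prod (fst + snd)
  refine ⟨e.symm.conj companion, ?_⟩
  have companion_mul_self : companion * companion = companion + δ • 1 := by
    ext <;> simp [companion, fst, snd, add_comm]
  ext x
  have hx := LinearMap.congr_fun companion_mul_self (e x)
  simp only [End.mul_apply, LinearMap.add_apply, LinearMap.smul_apply, End.one_apply] at hx
  simp [LinearEquiv.conj_apply_apply, hx]

theorem exists_mul_self_eq_add_smul_projection [FiniteDimensional F V] (δ : F)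
    (hV : Odd (finrank F V)) {u : V} (hu : u ≠ 0) :
    ∃ (f : Dual F V) (T : End F V), f u = 1 ∧ T u = 0 ∧
      T * T = T + δ • (1 - f.smulRight u) := by
  obtain ⟨f, hf⟩ : ∃ f : Dual F V, f u = 1 := Projective.exists_dual_eq_one F hu
  have f_ne_zero : f ≠ 0 := by rintro rfl; simp at hf
  have even_finrank_ker : Even (finrank F f.ker) := by
    rw [← Dual.finrank_ker_add_one_of_ne_zero f_ne_zero] at hV
    grind
  obtain ⟨T, hT⟩ := exists_mul_self_eq_of_even_finrank δ even_finrank_ker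
  let proj : V →ₗ[F] f.ker :=
    (1 - f.smulRight u : End F V).codRestrict f.ker fun x ↦ by simp [hf]
  have coe_proj (x : V) : (proj x : V) = x - f x • u := rfl
  have proj_coe (x : f.ker) : proj x = x := Subtype.ext (by simp [coe_proj])
  have proj_self : proj u = 0 := Subtype.ext (by simp [coe_proj, hf])
  refine ⟨f, f.ker.subtype ∘ₗ T ∘ₗ proj, hf, by simp [proj_self], ?_⟩
  ext x
  simpa [proj_coe, coe_proj] using congrArg Subtype.val (LinearMap.congr_fun hT (proj x))

end QuadraticEndomorphism

section AlternatingForm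

variable {B : BilinForm F V}

theorem sup_span_singleton_le_orthogonal (hB : B.IsAlt) {U : Submodule F V}
    (hU : U ≤ B.orthogonal U) {z : V} (hz : z ∈ B.orthogonal U) :
    U ⊔ span F {z} ≤ B.orthogonal (U ⊔ span F {z}) := by
  intro x hx y hy
  simp only [Submodule.mem_sup, Submodule.mem_span_singleton] at hx hy
  obtain ⟨u, hu, _, ⟨a, rfl⟩, rfl⟩ := hx
  obtain ⟨w, hw, _, ⟨b, rfl⟩, rfl⟩ := hy
  have hwu : B w u = 0 := hU hu w hw
  have hwz : B w z = 0 := hz w hw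
  have hzu : B z u = 0 := hB.isRefl _ _ (hz u hu)
  simp [hwu, hwz, hzu, hB.self_eq_zero]

variable [FiniteDimensional F V]

theorem exists_ge_orthogonal_eq_self (hB : B.IsAlt) {U : Submodule F V}
    (hU : U ≤ B.orthogonal U) : ∃ L, U ≤ L ∧ B.orthogonal L = L := by
  obtain ⟨L, hUL, hL⟩ :=
    exists_maximal_ge_of_wellFoundedGT (fun L : Submodule F V ↦ L ≤ B.orthogonal L) U hU
  refine ⟨L, hUL, le_antisymm (fun z hz ↦ ?_) hL.prop⟩
  exact hL.le_of_ge (sup_span_singleton_le_orthogonal hB hL.prop hz) le_sup_left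
    (le_sup_right (a := L) (Submodule.mem_span_singleton_self z))

theorem even_finrank_add_finrank_ker (hB : B.IsAlt) :
    Even (finrank F V + finrank F B.ker) := by
  obtain ⟨L, -, hL⟩ := exists_ge_orthogonal_eq_self hB (bot_le : ⊥ ≤ B.orthogonal ⊥)
  have ker_le : B.ker ≤ L := by
    rw [← hL, ← BilinForm.orthogonal_top_eq_ker hB.isRefl]
    exact BilinForm.orthogonal_le le_top
  have dim_eq := BilinForm.finrank_add_finrank_orthogonal' (B := B) L
  rw [hL, inf_eq_right.2 ker_le] at dim_eq
  exact ⟨_, dim_eq.symm⟩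

theorem even_finrank_add_finrank_inf_orthogonal (hB : B.IsAlt) (U : Submodule F V) :
    Even (finrank F U + finrank F ↥(U ⊓ B.orthogonal U)) := by
  have restrict_isAlt : (B.restrict U).IsAlt := fun x ↦ hB x
  have map_ker_eq : (B.restrict U).ker.map U.subtype = U ⊓ B.orthogonal U := by
    ext x
    simp [BilinForm.mem_orthogonal_iff, LinearMap.ext_iff, hB.eq_iff (x := x), and_comm]
  rw [← map_ker_eq, Submodule.finrank_map_subtype_eq]
  exact even_finrank_add_finrank_ker restrict_isAlt

theorem two_mul_finrank_of_orthogonal_eq_self (hB : B.Nondegenerate) {L : Submodule F V}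
    (hL : B.orthogonal L = L) : 2 * finrank F L = finrank F V := by
  have dim_eq := BilinForm.finrank_orthogonal hB L
  rw [hL] at dim_eq
  have := L.finrank_le
  lia

theorem exists_isCompl_le_orthogonal (hB : B.IsAlt) (hB' : B.Nondegenerate)
    {L : Submodule F V} (hL : B.orthogonal L = L) :
    ∃ M, IsCompl L M ∧ M ≤ B.orthogonal M := by
  obtain ⟨M, -, hM⟩ := exists_maximal_ge_of_wellFoundedGT
    (fun M : Submodule F V ↦ Disjoint L M ∧ M ≤ B.orthogonal M) ⊥ ⟨disjoint_bot_right, bot_le⟩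
  have orthogonal_le_sup : B.orthogonal M ≤ L ⊔ M := by
    intro z hz
    by_contra hzLM
    have disjoint_sup : Disjoint L (M ⊔ span F {z}) :=
      hM.prop.1.disjoint_sup_right_of_disjoint_sup_left
        (Submodule.disjoint_span_singleton_of_notMem hzLM)
    have isotropic_sup := sup_span_singleton_le_orthogonal hB hM.prop.2 hz
    have hzM := hM.le_of_ge ⟨disjoint_sup, isotropic_sup⟩ le_sup_left
      (le_sup_right (a := M) (Submodule.mem_span_singleton_self z))
    exact hzLM (le_sup_right (a := L) hzM)
  have orthogonal_sup_eq_bot : B.orthogonal (L ⊔ M) = ⊥ := by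
    refine eq_bot_iff.2 (hM.prop.1 ?_ ?_)
    · exact (BilinForm.orthogonal_le le_sup_left).trans hL.le
    · exact (BilinForm.orthogonal_le orthogonal_le_sup).trans
        (BilinForm.orthogonal_orthogonal hB' hB.isRefl M).le
  refine ⟨M, ⟨hM.prop.1, codisjoint_iff.2 ?_⟩, hM.prop.2⟩
  rw [← BilinForm.orthogonal_orthogonal hB' hB.isRefl (L ⊔ M), orthogonal_sup_eq_bot,
    BilinForm.orthogonal_bot]

theorem exists_equiv_dual_prod (hB : B.IsAlt) (hB' : B.Nondegenerate)
    {L : Submodule F V} (hL : B.orthogonal L = L) :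
    ∃ e : V ≃ₗ[F] Dual F L × L, (∀ x : L, e x = (0, x)) ∧
      ∀ x y, B x y = (e y).1 (e x).2 - (e x).1 (e y).2 := by
  obtain ⟨M, isCompl, hM⟩ := exists_isCompl_le_orthogonal hB hB' hL
  let pairing : M →ₗ[F] Dual F L := B.flip.domRestrict₁₂ M L
  have pairing_injective : Function.Injective pairing := by
    refine (injective_iff_map_eq_zero _).2 fun m hm ↦ Subtype.ext ?_
    have hmL : (m : V) ∈ L := by
      rw [← hL]
      exact fun l hl ↦ LinearMap.congr_fun hm ⟨l, hl⟩
    exact (Submodule.disjoint_def.1 isCompl.disjoint) m hmL m.2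
  have finrank_eq : finrank F M = finrank F (Dual F L) := by
    have := Submodule.finrank_add_eq_of_isCompl isCompl
    have := two_mul_finrank_of_orthogonal_eq_self hB' hL
    rw [Subspace.dual_finrank_eq]
    lia
  let toDual := pairing.linearEquivOfInjective pairing_injective finrank_eq
  let split := Submodule.prodEquivOfIsCompl M L isCompl.symm
  have form_split (p r : M × L) : B (split p) (split r) = pairing r.1 p.2 - pairing p.1 r.2 := by
    have hpr : B p.1 r.1 = 0 := hM r.1.2 p.1 p.1.2
    have hpr' : B p.2 r.2 = 0 := hL.ge r.2.2 p.2 p.2.2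
    have pairing_apply (m : M) (l : L) : pairing m l = B l m := rfl
    simp [split, pairing_apply, hpr, hpr', ← hB.neg_eq p.1.1 r.2.1, add_comm]
  refine ⟨split.symm ≪≫ₗ toDual.prodCongr (LinearEquiv.refl F L), fun x ↦ ?_, fun x y ↦ ?_⟩
  · simp [split]
  · simpa [toDual] using form_split (split.symm x) (split.symm y)

theorem exists_selfAdjoint_mul_self_eq (hB : B.IsAlt) (hB' : B.Nondegenerate) {n : ℕ}
    (hV : finrank F V = 4 * n + 2) (δ : F) {u : V} (hu : u ≠ 0) :
    ∃ (v : V) (J : End F V), B u v = 1 ∧ J u = 0 ∧ (∀ x y, B (J x) y = B x (J y)) ∧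
      ∀ x, J (J x) = J x + δ • (x + B x u • v - B x v • u) := by
  obtain ⟨L, hL, lagrangian⟩ := exists_ge_orthogonal_eq_self hB
    (bot_sup_eq (span F {u}) ▸ sup_span_singleton_le_orthogonal hB bot_le (by simp))
  lift u to L using hL (Submodule.mem_span_singleton_self u)
  have odd_finrank : Odd (finrank F L) := by
    have := two_mul_finrank_of_orthogonal_eq_self hB' lagrangian
    exact ⟨n, by lia⟩
  obtain ⟨f, T, hfu, hTu, hT⟩ := exists_mul_self_eq_add_smul_projection δ odd_finrank
    (u := u) (by simpa using hu)
  have hTT (l : L) : T (T l) = T l + δ • (l - f l • u) := LinearMap.congr_fun hT l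
  obtain ⟨e, he, form_eq⟩ := exists_equiv_dual_prod hB hB' lagrangian
  refine ⟨e.symm (f, 0), e.symm.conj (T.dualMap.prodMap T), ?_, ?_, fun x y ↦ ?_, fun x ↦ ?_⟩
  · simp [form_eq, he, hfu]
  · simp [LinearEquiv.conj_apply_apply, he, hTu]
  · simp [LinearEquiv.conj_apply_apply, form_eq]
  · apply e.injective
    ext l
    · simp [LinearEquiv.conj_apply_apply, form_eq, he, hTT, sub_eq_add_neg, mul_comm]
    · simp [LinearEquiv.conj_apply_apply, form_eq, he, hTT]

end AlternatingForm

section CharTwo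

variable [CharP F 2] {Q : QuadraticForm F V}

theorem polarBilin_isAlt (Q : QuadraticForm F V) : Q.polarBilin.IsAlt := fun x ↦ by
  simp [QuadraticMap.polar_self, CharTwo.two_eq_zero]

variable [PerfectRing F 2]

theorem exists_map_smul_eq {x : V} (hx : Q x ≠ 0) (c : F) : ∃ a : F, Q (a • x) = c := by
  obtain ⟨a, ha⟩ := surjective_frobenius F 2 (c / Q x)
  refine ⟨a, ?_⟩
  rw [QuadraticMap.map_smul, ← pow_two, ← frobenius_def, ha, smul_eq_mul, div_mul_cancel₀ c hx]

theorem Nondeg.finrank_ker_polarBilin_le_one (hQ : Nondeg Q) :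
    finrank F Q.polarBilin.ker ≤ 1 := by
  have polar_eq_zero {x : V} (hx : x ∈ Q.polarBilin.ker) (y : V) : polar Q x y = 0 :=
    LinearMap.congr_fun hx y
  rcases eq_or_ne Q.polarBilin.ker ⊥ with ker_eq | ker_ne
  · rw [ker_eq, finrank_bot]
    exact zero_le_one
  obtain ⟨x, hx, x_ne_zero⟩ := Submodule.exists_mem_ne_zero_of_ne_bot ker_ne
  have hQx : Q x ≠ 0 := fun h ↦ x_ne_zero (hQ x h (polar_eq_zero hx))
  refine finrank_le_one ⟨x, hx⟩ fun ⟨y, hy⟩ ↦ ?_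
  obtain ⟨a, ha⟩ := exists_map_smul_eq hQx (Q y)
  have map_sub_eq_zero : Q (a • x - y) = 0 := by
    rw [sub_eq_add_neg, QuadraticMap.map_add Q, QuadraticMap.map_neg, ha,
      QuadraticMap.polar_smul_left, polar_eq_zero hx, smul_zero, add_zero,
      CharTwo.add_self_eq_zero]
  exact ⟨a, Subtype.ext (sub_eq_zero.1 (hQ _ map_sub_eq_zero
    (polar_eq_zero (sub_mem (Submodule.smul_mem _ a hx) hy))))⟩

variable [FiniteDimensional F V]

theorem Nondeg.nondegenerate_polarBilin_s12 (hQ : Nondeg Q) (hV : Even (finrank F V)) :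
    Q.polarBilin.Nondegenerate := by
  rw [(polarBilin_isAlt Q).isRefl.nondegenerate_iff_separatingLeft,
    LinearMap.separatingLeft_iff_ker_eq_bot, ← Submodule.finrank_eq_zero]
  have := even_finrank_add_finrank_ker (polarBilin_isAlt Q)
  have := hQ.finrank_ker_polarBilin_le_one
  grind

theorem NondegOn.exists_nucleus {U : Submodule F V} (hU : NondegOn Q U)
    (odd_finrank : Odd (finrank F U)) :
    ∃ u ∈ U, Q u = 1 ∧ ∀ x ∈ U, polar Q x u = 0 := by
  have radical_ne_bot : U ⊓ BilinForm.orthogonal Q.polarBilin U ≠ ⊥ := by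
    intro h
    have := even_finrank_add_finrank_inf_orthogonal (polarBilin_isAlt Q) U
    rw [h, finrank_bot] at this
    grind
  obtain ⟨u, ⟨huU, hu⟩, u_ne_zero⟩ := Submodule.exists_mem_ne_zero_of_ne_bot radical_ne_bot
  have hQu : Q u ≠ 0 := fun h ↦
    u_ne_zero (hU u huU h fun w hw ↦ (QuadraticMap.polar_comm Q u w).trans (hu w hw))
  obtain ⟨a, ha⟩ := exists_map_smul_eq hQu 1
  refine ⟨a • u, U.smul_mem a huU, ha, fun x hx ↦ ?_⟩
  simp [show polar Q x u = 0 from hu x hx]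

end CharTwo

section TotallySingular

variable {Q : QuadraticForm F V} {g : Submodule F V}

theorem TotallySingular.polar_eq_zero (hg : TotallySingular Q g) {x y : V} (hx : x ∈ g)
    (hy : y ∈ g) : polar Q x y = 0 := by
  simp [polar, hg _ (g.add_mem hx hy), hg x hx, hg y hy]

theorem TotallySingular.sup_span_singleton_s12 (hg : TotallySingular Q g) {z : V} (hz : Q z = 0)
    (hgz : ∀ x ∈ g, polar Q x z = 0) : TotallySingular Q (g ⊔ span F {z}) := by
  intro y hy
  simp only [Submodule.mem_sup, Submodule.mem_span_singleton] at hy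
  obtain ⟨x, hx, _, ⟨a, rfl⟩, rfl⟩ := hy
  simp [QuadraticMap.map_add, QuadraticMap.map_smul, hg x hx, hz, hgz x hx]

theorem TotallySingular.mem_of_polar_eq_zero [FiniteDimensional F V] (hg : TotallySingular Q g)
    (hmax : ∀ W, TotallySingular Q W → finrank F W ≤ finrank F g) {z : V} (hz : Q z = 0)
    (hgz : ∀ x ∈ g, polar Q x z = 0) : z ∈ g := by
  have sup_eq : g = g ⊔ span F {z} :=
    Submodule.eq_of_le_of_finrank_le le_sup_left (hmax _ (hg.sup_span_singleton_s12 hz hgz))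
  rw [sup_eq]
  exact le_sup_right (a := g) (Submodule.mem_span_singleton_self z)

end TotallySingular

theorem finrank_inf_ker_add_one [FiniteDimensional F V] {g : Submodule F V} {f : Dual F V}
    (hgf : ¬ g ≤ f.ker) : finrank F ↥(g ⊓ f.ker) + 1 = finrank F g := by
  have domRestrict_ne_zero : f.domRestrict g ≠ 0 := fun h ↦
    hgf fun x hx ↦ LinearMap.congr_fun h ⟨x, hx⟩
  rw [← Dual.finrank_ker_add_one_of_ne_zero domRestrict_ne_zero, ← Submodule.map_comap_subtype,
    Submodule.finrank_map_subtype_eq]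
  rfl

/-- The data from which the hemisystems are built: for the hyperplane `H`, its `nucleus`, a `pole`
forming a hyperbolic pair with the nucleus, and a self-adjoint endomorphism `twist` that kills
the nucleus and satisfies `J ^ 2 = J + δ` on the orthogonal complement of that pair. -/
structure HemisystemFrame (Q : QuadraticForm F V) (H : Submodule F V) (δ : F) where
  nucleus : V
  pole : V
  twist : End F V
  map_nucleus : Q nucleus = 1
  polar_nucleus_pole : polar Q nucleus pole = 1
  mem_iff (x : V) : x ∈ H ↔ polar Q x nucleus = 0
  twist_nucleus : twist nucleus = 0
  polar_twist_left (x y : V) : polar Q (twist x) y = polar Q x (twist y)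
  twist_twist (x : V) : twist (twist x) =
    twist x + δ • (x + polar Q x nucleus • pole - polar Q x pole • nucleus)

namespace HemisystemFrame

variable {Q : QuadraticForm F V} {H : Submodule F V} {δ : F}

theorem nonempty [CharP F 2] [PerfectRing F 2] {n : ℕ} (hV : finrank F V = 4 * n + 2)
    (hQ : Nondeg Q) (hH : finrank F H = 4 * n + 1) (hHQ : NondegOn Q H) (δ : F) :
    Nonempty (HemisystemFrame Q H δ) := by
  have : FiniteDimensional F V := .of_finrank_pos (by lia)
  obtain ⟨u, -, hQu, hu⟩ := hHQ.exists_nucleus ⟨2 * n, by lia⟩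
  have u_ne_zero : u ≠ 0 := by
    rintro rfl
    simp at hQu
  have nondegenerate := hQ.nondegenerate_polarBilin_s12 ⟨2 * n + 1, by lia⟩
  obtain ⟨v, J, huv, hJu, selfAdjoint, hJJ⟩ :=
    exists_selfAdjoint_mul_self_eq (polarBilin_isAlt Q) nondegenerate hV δ u_ne_zero
  have H_eq : H = (Q.polarBilin.flip u).ker := by
    refine Submodule.eq_of_le_of_finrank_eq hu ?_
    have functional_ne_zero : Q.polarBilin.flip u ≠ 0 := fun h ↦
      one_ne_zero (huv.symm.trans ((QuadraticMap.polar_comm Q u v).trans (LinearMap.congr_fun h v)))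
    have := Dual.finrank_ker_add_one_of_ne_zero functional_ne_zero
    lia
  exact ⟨⟨u, v, J, hQu, huv, fun x ↦ by rw [H_eq]; rfl, hJu, selfAdjoint, hJJ⟩⟩

variable (S : HemisystemFrame Q H δ)

theorem polar_twist_nucleus (x : V) : polar Q (S.twist x) S.nucleus = 0 := by
  rw [S.polar_twist_left, S.twist_nucleus, QuadraticMap.polar_zero_right]

/-- The bilinear form `(x, y) ↦ B (J x) y`, where `B` is the polar form and `J` the twist. -/
def twistForm : BilinForm F V :=
  Q.polarBilin ∘ₗ S.twist

theorem twistForm_apply (x y : V) : S.twistForm x y = polar Q (S.twist x) y :=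
  rfl

/-- The function whose class modulo the range of the Artin–Schreier map decides to which of the
two hemisystems a normalised singular vector belongs. -/
def disc (x : V) : F :=
  Q (S.twist x) + δ * polar Q x S.pole

theorem disc_add_nucleus (x : V) : S.disc (x + S.nucleus) = S.disc x + δ := by
  simp only [disc, map_add, S.twist_nucleus, add_zero, QuadraticMap.polar_add_left,
    S.polar_nucleus_pole]
  ring

/-- The radical of the twisted form restricted to `g ⊓ H`. -/
def radical (g : Submodule F V) : Submodule F V :=
  g ⊓ H ⊓ S.twistForm.orthogonal (g ⊓ H)

/-- The perturbation of the twist by multiples of the nucleus that makes the image of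
`S.radical g` orthogonal to all of `g` rather than to `g ⊓ H` only, where `v ∈ g ∖ H`. -/
def shift (v : V) : End F V :=
  S.twist - (Q.polarBilin v ∘ₗ S.twist).smulRight S.nucleus

theorem shift_apply (v x : V) :
    S.shift v x = S.twist x - polar Q v (S.twist x) • S.nucleus :=
  rfl

theorem map_shift (v x : V) :
    Q (S.shift v x) = Q (S.twist x) + polar Q v (S.twist x) ^ 2 := by
  rw [shift_apply, sub_eq_add_neg, QuadraticMap.map_add Q]
  simp [QuadraticMap.map_smul, S.map_nucleus, S.polar_twist_nucleus, pow_two]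

variable {S} {g : Submodule F V} {r v x : V}

theorem polar_twist_of_mem_radical (hr : r ∈ S.radical g) (hv : v ∈ g)
    (hvN : polar Q v S.nucleus = 1) (hx : x ∈ g) :
    polar Q x (S.twist r) = polar Q x S.nucleus * polar Q v (S.twist r) := by
  have hxv : x - polar Q x S.nucleus • v ∈ g ⊓ H :=
    ⟨g.sub_mem hx (g.smul_mem _ hv), by simp [S.mem_iff, hvN]⟩
  have := hr.2 _ hxv
  rw [twistForm_apply, S.polar_twist_left] at this
  simpa [sub_eq_zero] using this

theorem twistForm_isAlt [CharP F 2] (S : HemisystemFrame Q H δ) : S.twistForm.IsAlt := by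
  intro x
  have polar_twist_self : polar Q (S.twist x) (S.twist x) = 0 := polarBilin_isAlt Q (S.twist x)
  have polar_self : polar Q x x = 0 := polarBilin_isAlt Q x
  rw [← S.polar_twist_left, S.twist_twist] at polar_twist_self
  simp only [sub_eq_add_neg, QuadraticMap.polar_add_left, QuadraticMap.polar_smul_left,
    QuadraticMap.polar_neg_left, polar_self, QuadraticMap.polar_comm Q S.pole x,
    QuadraticMap.polar_comm Q S.nucleus x, smul_eq_mul] at polar_twist_self
  rw [twistForm_apply]
  linear_combination polar_twist_self

theorem eq_ker (S : HemisystemFrame Q H δ) : H = (Q.polarBilin.flip S.nucleus).ker :=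
  Submodule.ext S.mem_iff

theorem odd_finrank_radical [CharP F 2] [FiniteDimensional F V] (S : HemisystemFrame Q H δ)
    (hg : Even (finrank F g)) (hgH : ¬ g ≤ H) : Odd (finrank F (S.radical g)) := by
  have dim_eq : finrank F ↥(g ⊓ H) + 1 = finrank F g := by
    rw [S.eq_ker] at hgH ⊢
    exact finrank_inf_ker_add_one hgH
  have := even_finrank_add_finrank_inf_orthogonal S.twistForm_isAlt (g ⊓ H)
  change Even (_ + finrank F (S.radical g)) at this
  grind

theorem twist_twist_of_mem (hx : x ∈ H) :
    S.twist (S.twist x) = S.twist x + δ • (x - polar Q x S.pole • S.nucleus) := by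
  rw [S.twist_twist, (S.mem_iff x).1 hx, zero_smul, add_zero]

theorem shift_mem_radical [CharP F 2] [FiniteDimensional F V] (hg : TotallySingular Q g)
    (hmax : ∀ W, TotallySingular Q W → finrank F W ≤ finrank F g) (hr : r ∈ S.radical g)
    (hv : v ∈ g) (hvN : polar Q v S.nucleus = 1) (hQr : Q (S.shift v r) = 0) :
    S.shift v r ∈ S.radical g := by
  have hrH : r ∈ H := hr.1.2
  refine ⟨⟨hg.mem_of_polar_eq_zero hmax hQr fun x hx ↦ ?_, ?_⟩, fun x hx ↦ ?_⟩
  · simp [shift_apply, polar_twist_of_mem_radical hr hv hvN hx, mul_comm]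
  · have polar_nucleus_self : polar Q S.nucleus S.nucleus = 0 := polarBilin_isAlt Q S.nucleus
    simp [S.mem_iff, shift_apply, S.polar_twist_nucleus, polar_nucleus_self]
  · have hxN : polar Q x S.nucleus = 0 := (S.mem_iff x).1 hx.2
    have hxr : polar Q x r = 0 := hg.polar_eq_zero hx.1 hr.1.1
    have hxJr : polar Q x (S.twist r) = 0 := by
      rw [polar_twist_of_mem_radical hr hv hvN hx.1, hxN, zero_mul]
    rw [twistForm_apply, S.polar_twist_left, shift_apply]
    simp [S.twist_nucleus, twist_twist_of_mem hrH, hxJr, hxr, hxN, sub_eq_add_neg]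

theorem shift_shift_of_mem_radical (hg : TotallySingular Q g) (hr : r ∈ S.radical g)
    (hv : v ∈ g) (hvN : polar Q v S.nucleus = 1) :
    S.shift v (S.shift v r) = S.shift v r + δ • r := by
  have hvr : polar Q v r = 0 := hg.polar_eq_zero hv hr.1.1
  have twist_shift :
      S.twist (S.shift v r) = S.twist r + δ • (r - polar Q r S.pole • S.nucleus) := by
    simp [shift_apply, S.twist_nucleus, twist_twist_of_mem hr.1.2]
  have polar_twist_shift :
      polar Q v (S.twist (S.shift v r)) = polar Q v (S.twist r) - δ * polar Q r S.pole := by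
    simp [twist_shift, hvr, hvN, sub_eq_add_neg]
  rw [shift_apply, polar_twist_shift, twist_shift, shift_apply]
  module

theorem exists_mem_radical_map_shift_ne_zero [CharP F 2] [FiniteDimensional F V]
    (hδ : ∀ a : F, a ^ 2 - a ≠ δ) (hg : TotallySingular Q g) (even_finrank : Even (finrank F g))
    (hmax : ∀ W, TotallySingular Q W → finrank F W ≤ finrank F g)
    (hv : v ∈ g) (hvN : polar Q v S.nucleus = 1) :
    ∃ r ∈ S.radical g, Q (S.shift v r) ≠ 0 := by
  by_contra! h
  have mapsTo : ∀ r ∈ S.radical g, S.shift v r ∈ S.radical g := fun r hr ↦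
    shift_mem_radical hg hmax hr hv hvN (h r hr)
  have restrict_mul_self : (S.shift v).restrict mapsTo * (S.shift v).restrict mapsTo =
      (S.shift v).restrict mapsTo + δ • 1 :=
    LinearMap.ext fun r ↦ Subtype.ext (shift_shift_of_mem_radical hg r.2 hv hvN)
  have hgH : ¬ g ≤ H := fun hle ↦ by simpa [hvN] using (S.mem_iff v).1 (hle hv)
  exact Nat.not_even_iff_odd.2 (S.odd_finrank_radical even_finrank hgH)
    (even_finrank_of_mul_self_eq hδ restrict_mul_self)

theorem disc_add_of_mem_radical (hg : TotallySingular Q g) (hr : r ∈ S.radical g)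
    (hv : v ∈ g) (hvN : polar Q v S.nucleus = 1) (hx : x ∈ g) (hxN : polar Q x S.nucleus = 1) :
    S.disc (x + r) = S.disc x + Q (S.twist r) + polar Q v (S.twist r) := by
  have hxr : polar Q x r = 0 := hg.polar_eq_zero hx hr.1.1
  have polar_twist_twist : polar Q (S.twist x) (S.twist r) =
      polar Q v (S.twist r) - δ * polar Q r S.pole := by
    rw [S.polar_twist_left, twist_twist_of_mem hr.1.2, QuadraticMap.polar_add_right,
      polar_twist_of_mem_radical hr hv hvN hx]
    simp [hxr, hxN, sub_eq_add_neg]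
  simp only [disc, map_add, QuadraticMap.map_add Q, QuadraticMap.polar_add_left, polar_twist_twist]
  ring

theorem exists_translation_swaps [CharP F 2] [Finite F] [FiniteDimensional F V]
    (hδ : δ ∉ (artinSchreier F 2).range) (hg : TotallySingular Q g)
    (even_finrank : Even (finrank F g))
    (hmax : ∀ W, TotallySingular Q W → finrank F W ≤ finrank F g)
    (hv : v ∈ g) (hvN : polar Q v S.nucleus = 1) :
    ∃ r ∈ g ⊓ H, ∀ x ∈ g, polar Q x S.nucleus = 1 →
      (S.disc (x + r) ∈ (artinSchreier F 2).range ↔ S.disc x ∉ (artinSchreier F 2).range) := by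
  obtain ⟨r₀, hr₀, hQr₀⟩ := exists_mem_radical_map_shift_ne_zero
    (fun a ha ↦ hδ ⟨a, ha⟩) hg even_finrank hmax hv hvN
  obtain ⟨a, ha⟩ := exists_map_smul_eq hQr₀ δ
  set r := a • r₀
  have hr : r ∈ S.radical g := (S.radical g).smul_mem a hr₀
  have map_shift_eq : Q (S.shift v r) = δ := by rw [map_smul, ha]
  refine ⟨r, hr.1, fun x hx hxN ↦ ?_⟩
  -- Modulo the Artin–Schreier map, `Q (J r) + B v (J r)` agrees with `Q (S.shift v r) = δ`.
  have disc_eq : S.disc (x + r) = S.disc x + (δ - artinSchreier F 2 (polar Q v (S.twist r))) := by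
    rw [disc_add_of_mem_radical hg hr hv hvN hx hxN, artinSchreier_apply]
    linear_combination map_shift_eq - map_shift S v r
  have increment_notMem :
      δ - artinSchreier F 2 (polar Q v (S.twist r)) ∉ (artinSchreier F 2).range := by
    rwa [sub_eq_add_neg,
      AddSubgroup.add_mem_cancel_right _ (neg_mem (AddMonoidHom.mem_range.2 ⟨_, rfl⟩))]
  rw [disc_eq, AddSubgroup.add_mem_iff_of_index_two (index_range_artinSchreier F 2)]
  tauto

end HemisystemFrame

theorem ncard_inter_eq_ncard_sdiff_of_swaps {α : Type*} {f : α → α} (hf : Function.Injective f)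
    {X A : Set α} (hX : X.Finite) (mapsTo : Set.MapsTo f X X)
    (swaps : ∀ x ∈ X, f x ∈ A ↔ x ∉ A) : (X ∩ A).ncard = (X \ A).ncard := by
  apply le_antisymm
  · refine Set.ncard_le_ncard_of_injOn f (fun x hx ↦ ⟨mapsTo hx.1, ?_⟩) hf.injOn hX.sdiff
    rw [swaps x hx.1, not_not]
    exact hx.2
  · exact Set.ncard_le_ncard_of_injOn f (fun x hx ↦ ⟨mapsTo hx.1, (swaps x hx.1).2 hx.2⟩)
      hf.injOn (hX.inter_of_left A)

theorem exists_mem_apply_eq_one {g : Submodule F V} {f : Dual F V} (hgf : ¬ g ≤ f.ker) :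
    ∃ v ∈ g, f v = 1 := by
  obtain ⟨v, hv, hfv⟩ := SetLike.not_le_iff_exists.1 hgf
  exact ⟨(f v)⁻¹ • v, g.smul_mem _ hv, by simp [inv_mul_cancel₀ hfv]⟩

open scoped Pointwise in
theorem ncard_setOf_mem_and_apply_eq_one [FiniteDimensional F V] {g : Submodule F V}
    {f : Dual F V} (hgf : ¬ g ≤ f.ker) :
    {x | x ∈ g ∧ f x = 1}.ncard = Nat.card F ^ (finrank F g - 1) := by
  obtain ⟨v, hv, hfv⟩ := exists_mem_apply_eq_one hgf
  have eq_coset : {x | x ∈ g ∧ f x = 1} = v +ᵥ ((g ⊓ f.ker : Submodule F V) : Set V) := by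
    ext x
    simp [Set.mem_vadd_set_iff_neg_vadd_mem, neg_add_eq_sub, g.sub_mem_iff_left hv, hfv,
      sub_eq_zero]
  rw [eq_coset, Set.ncard_vadd_set, ← finrank_inf_ker_add_one hgf, Nat.add_sub_cancel,
    ← natCard_eq_pow_finrank, ← Nat.card_coe_set_eq]
  rfl

namespace HemisystemFrame

variable {Q : QuadraticForm F V} {H g : Submodule F V} {δ : F} (S : HemisystemFrame Q H δ)

/-- The singular vectors `x` normalised by `B x N = 1`, where `N` is the nucleus: the singular
points outside `H` contain exactly one of these each. -/
def affineVectors : Set V :=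
  {x | Q x = 0 ∧ polar Q x S.nucleus = 1}

theorem injOn_span_singleton_affineVectors :
    Set.InjOn (fun x ↦ span F {x}) S.affineVectors := by
  rintro x ⟨-, hx⟩ y ⟨-, hy⟩ hxy
  obtain ⟨a, rfl⟩ := Submodule.span_singleton_eq_span_singleton.1 hxy
  have ha : (a : F) = 1 := by simpa [Units.smul_def, hx] using hy
  rw [Units.smul_def, ha, one_smul]

theorem image_span_singleton_affineVectors :
    (fun x ↦ span F {x}) '' S.affineVectors = {P | IsSingularPoint Q P ∧ ¬ P ≤ H} := by
  ext P
  constructor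
  · rintro ⟨x, ⟨hQx, hxN⟩, rfl⟩
    have hxH : x ∉ H := by simp [S.mem_iff, hxN]
    refine ⟨⟨x, fun hx ↦ hxH (hx ▸ H.zero_mem), hQx, rfl⟩, ?_⟩
    rwa [Submodule.span_singleton_le_iff_mem]
  · rintro ⟨⟨x, -, hQx, rfl⟩, hxH⟩
    rw [Submodule.span_singleton_le_iff_mem, S.mem_iff] at hxH
    refine ⟨(polar Q x S.nucleus)⁻¹ • x, ⟨?_, ?_⟩, ?_⟩
    · rw [QuadraticMap.map_smul, hQx, smul_zero]
    · rw [QuadraticMap.polar_smul_left, smul_eq_mul, inv_mul_cancel₀ hxH]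
    · exact Submodule.span_singleton_smul_eq (inv_ne_zero hxH).isUnit x

theorem isRelativeMOvoid_image_span_singleton {A : Set V} (hA : A ⊆ S.affineVectors) {k m : ℕ}
    (ncard_eq : ∀ g : Submodule F V, IsGenerator Q k g → ¬ g ≤ H → (A ∩ g).ncard = m) :
    IsRelativeMOvoid Q k H m ((fun x ↦ span F {x}) '' A) := by
  refine ⟨fun P hP ↦ ?_, fun g hg hgH ↦ ?_⟩
  · exact S.image_span_singleton_affineVectors.subset (Set.image_mono hA hP)
  · have points_eq : {P ∈ (fun x ↦ span F {x}) '' A | P ≤ g} =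
        (fun x ↦ span F {x}) '' (A ∩ g) := by
      ext P
      constructor
      · rintro ⟨⟨x, hx, rfl⟩, hxg⟩
        exact ⟨x, ⟨hx, (Submodule.span_singleton_le_iff_mem x g).1 hxg⟩, rfl⟩
      · rintro ⟨x, ⟨hx, hxg⟩, rfl⟩
        exact ⟨⟨x, hx, rfl⟩, (Submodule.span_singleton_le_iff_mem x g).2 hxg⟩
    have injOn : Set.InjOn (fun x ↦ span F {x}) (A ∩ g) :=
      S.injOn_span_singleton_affineVectors.mono (Set.inter_subset_left.trans hA)
    rw [points_eq, injOn.ncard_image, ncard_eq g hg hgH]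

theorem affineVectors_inter_eq (hg : TotallySingular Q g) :
    S.affineVectors ∩ g = {x | x ∈ g ∧ Q.polarBilin.flip S.nucleus x = 1} := by
  ext x
  exact ⟨fun hx ↦ ⟨hx.2, hx.1.2⟩, fun hx ↦ ⟨⟨hg x hx.1, hx.2⟩, hx.1⟩⟩

variable [CharP F 2]

/-- The vectors `x` for which `S.disc x` is of the form `a ^ 2 - a`. The two hemisystems consist
of the singular points whose normalised vector lies inside, respectively outside, this set. -/
def residueClass : Set V :=
  {x | S.disc x ∈ (artinSchreier F 2).range}

variable [Finite F] [FiniteDimensional F V]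

theorem ncard_affineVectors_inter_residueClass (hδ : δ ∉ (artinSchreier F 2).range) :
    (S.affineVectors ∩ S.residueClass).ncard = (S.affineVectors \ S.residueClass).ncard := by
  have : Finite V := Module.finite_of_finite F
  refine ncard_inter_eq_ncard_sdiff_of_swaps (add_left_injective S.nucleus) (Set.toFinite _)
    (fun x hx ↦ ?_) fun x _ ↦ ?_
  · have polar_nucleus_self : polar Q S.nucleus S.nucleus = 0 := polarBilin_isAlt Q S.nucleus
    constructor
    · simp [QuadraticMap.map_add Q, hx.1, hx.2, S.map_nucleus, CharTwo.add_self_eq_zero]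
    · simp [hx.2, polar_nucleus_self]
  · change S.disc (x + S.nucleus) ∈ (artinSchreier F 2).range ↔
      S.disc x ∉ (artinSchreier F 2).range
    rw [S.disc_add_nucleus, AddSubgroup.add_mem_iff_of_index_two (index_range_artinSchreier F 2)]
    tauto

theorem ncard_affineVectors_inter_of_isGenerator (hδ : δ ∉ (artinSchreier F 2).range) {k : ℕ}
    (hk : Even k) (hmax : ∀ W, TotallySingular Q W → finrank F W ≤ k) (hg : IsGenerator Q k g)
    (hgH : ¬ g ≤ H) :
    (S.affineVectors ∩ g ∩ S.residueClass).ncard = Nat.card F ^ (k - 1) / 2 ∧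
      ((S.affineVectors ∩ g) \ S.residueClass).ncard = Nat.card F ^ (k - 1) / 2 := by
  obtain ⟨hgQ, rfl⟩ := hg
  have hgN : ¬ g ≤ (Q.polarBilin.flip S.nucleus).ker := fun h ↦ hgH (h.trans S.eq_ker.ge)
  obtain ⟨v, hv, hvN⟩ := exists_mem_apply_eq_one hgN
  obtain ⟨r, hr, swaps⟩ := exists_translation_swaps (S := S) hδ hgQ hk hmax hv hvN
  have : Finite V := Module.finite_of_finite F
  have mapsTo : Set.MapsTo (· + r) (S.affineVectors ∩ g) (S.affineVectors ∩ g) := by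
    rintro x ⟨⟨-, hxN⟩, hxg⟩
    have hxr : x + r ∈ g := g.add_mem hxg hr.1
    exact ⟨⟨hgQ _ hxr, by simp [hxN, (S.mem_iff r).1 hr.2]⟩, hxr⟩
  have halves_eq : (S.affineVectors ∩ g ∩ S.residueClass).ncard =
      ((S.affineVectors ∩ g) \ S.residueClass).ncard :=
    ncard_inter_eq_ncard_sdiff_of_swaps (add_left_injective r) (Set.toFinite _) mapsTo
      fun x hx ↦ swaps x hx.2 hx.1.2
  have halves_add := Set.ncard_inter_add_ncard_sdiff_eq_ncard (S.affineVectors ∩ g)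
    S.residueClass
  rw [S.affineVectors_inter_eq hgQ, ncard_setOf_mem_and_apply_eq_one hgN] at halves_add
  rw [S.affineVectors_inter_eq hgQ] at halves_eq ⊢
  lia

end HemisystemFrame

theorem charP_two_of_even_card [Fintype F] (hF : Even (Fintype.card F)) : CharP F 2 :=
  ringChar.of_eq (FiniteField.even_card_iff_char_two.2 (Nat.even_iff.1 hF))

theorem statement_12_general
    (q n : ℕ) [Fintype F] (hq : Fintype.card F = q) (hq2 : Even q)
    (hV : finrank F V = 4 * n + 2)
    (Q : QuadraticForm F V) (hQnd : Nondeg Q) (hQw : HasWittIndex Q (2 * n))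
    (H : Submodule F V) (hH : finrank F H = 4 * n + 1) (hHnd : NondegOn Q H) :
    ∃ R₁ R₂ : Set (Submodule F V),
      R₁ ∩ R₂ = ∅ ∧
      R₁ ∪ R₂ = {P : Submodule F V | IsSingularPoint Q P ∧ ¬ P ≤ H} ∧
      IsRelativeMOvoid Q (2 * n) H (q ^ (2 * n - 1) / 2) R₁ ∧
      IsRelativeMOvoid Q (2 * n) H (q ^ (2 * n - 1) / 2) R₂ ∧
      R₁.ncard = R₂.ncard := by
  subst hq
  have : FiniteDimensional F V := .of_finrank_pos (by lia)
  have : CharP F 2 := charP_two_of_even_card hq2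
  obtain ⟨δ, hδ⟩ := exists_notMem_range_artinSchreier F 2
  obtain ⟨S⟩ := HemisystemFrame.nonempty hV hQnd hH hHnd δ
  have injOn := S.injOn_span_singleton_affineVectors
  have ncard_generator {g} (hg : IsGenerator Q (2 * n) g) :=
    S.ncard_affineVectors_inter_of_isGenerator hδ (even_two_mul n) hQw.1 hg
  rw [Nat.card_eq_fintype_card] at ncard_generator
  refine ⟨(fun x ↦ span F {x}) '' (S.affineVectors ∩ S.residueClass),
    (fun x ↦ span F {x}) '' (S.affineVectors \ S.residueClass), ?_, ?_,
    S.isRelativeMOvoid_image_span_singleton Set.inter_subset_left fun g hg hgH ↦ ?_,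
    S.isRelativeMOvoid_image_span_singleton Set.sdiff_subset fun g hg hgH ↦ ?_, ?_⟩
  · rw [← injOn.image_inter Set.inter_subset_left Set.sdiff_subset, Set.inter_assoc]
    simp
  · rw [← Set.image_union, Set.inter_union_sdiff, S.image_span_singleton_affineVectors]
  · rw [Set.inter_right_comm, (ncard_generator hg hgH).1]
  · rw [Set.sdiff_inter_right_comm, (ncard_generator hg hgH).2]
  · rw [(injOn.mono Set.inter_subset_left).ncard_image,
      (injOn.mono Set.sdiff_subset).ncard_image,
      S.ncard_affineVectors_inter_residueClass hδ]

/-- For `q` even and `n ≥ 2`, the singular points of `Q⁻(4n+1,q)` outside `H` can be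
partitioned into two relative hemisystems, i.e. two relative `(q^{2n−1}/2)`-ovoids of
equal size; in particular a relative `(q^{2n−1}/2)`-ovoid exists. -/
theorem statement_12
    (q n : ℕ) [Fintype F] (hq : Fintype.card F = q) (hq2 : Even q) (hn : 2 ≤ n)
    (hV : finrank F V = 4 * n + 2)
    (Q : QuadraticForm F V) (hQnd : Nondeg Q) (hQw : HasWittIndex Q (2 * n))
    (H : Submodule F V) (hH : finrank F H = 4 * n + 1) (hHnd : NondegOn Q H) :
    ∃ R₁ R₂ : Set (Submodule F V),
      R₁ ∩ R₂ = ∅ ∧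
      R₁ ∪ R₂ = {P : Submodule F V | IsSingularPoint Q P ∧ ¬ P ≤ H} ∧
      IsRelativeMOvoid Q (2 * n) H (q ^ (2 * n - 1) / 2) R₁ ∧
      IsRelativeMOvoid Q (2 * n) H (q ^ (2 * n - 1) / 2) R₂ ∧
      R₁.ncard = R₂.ncard :=
  statement_12_general q n hq hq2 hV Q hQnd hQw H hH hHnd
end
end
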